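/- arXiv:1105.1084 — 2 statements merged into one kernel-verified Lean document; each statement's English description precedes it below -/
import Mathlib

section
/- Let n ≥ 1, let Λ ⊆ ℝⁿ be a Borel set of positive Lebesgue measure, let ξ: Λ → ℓ²(ℕ) be a weakly measurable map with ‖ξ(p)‖ = 1 for almost every p ∈ Λ, and let M be the U_Λ-covariant POVM on (ℝⁿ, ℬ(ℝⁿ)) acting on L²(Λ) determined by ⟨φ, M(B)ψ⟩ = (2π)^{−n} ∫_B ∫_Λ ∫_Λ e^{i(x|p₁−p₂)} ⟨ξ(p₁), ξ(p₂)⟩ conj(φ(p₁)) ψ(p₂) dp₁ dp₂ dx for all φ, ψ ∈ (L¹ ∩ L²)(Λ). Let 𝐇 ⊆ ℓ²(ℕ) be the closed linear span of the vectors ∫_Λ φ(p) ξ(p) dp, φ ∈ (L¹ ∩ L²)(Λ). Then M is an extreme point of the convex set of all U_Λ-covariant POVMs on (ℝⁿ, ℬ(ℝⁿ)) acting on L²(Λ) if and only if the only bounded operator A on 𝐇 satisfying ⟨ξ(p), A ξ(p)⟩ = 0 for almost every p ∈ Λ is A = 0. -/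
open MeasureTheory Set
open scoped ComplexConjugate

local notation "⟪" x ", " y "⟫" => @inner ℂ _ _ x y

/-- A normalized positive operator valued measure (POVM). -/
structure POVM (Ω : Type*) [MeasurableSpace Ω] (H : Type*) [NormedAddCommGroup H]
    [InnerProductSpace ℂ H] [CompleteSpace H] where
  toFun : Set Ω → (H →L[ℂ] H)
  isPositive : ∀ B : Set Ω, MeasurableSet B → (toFun B).IsPositive
  normalized : toFun Set.univ = 1
  m_iUnion : ∀ B : ℕ → Set Ω, (∀ k, MeasurableSet (B k)) →
    Pairwise (Function.onFun Disjoint B) → ∀ φ ψ : H,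
      HasSum (fun k => ⟪φ, toFun (B k) ψ⟫) ⟪φ, toFun (⋃ k, B k) ψ⟫

/-- `ℓ²(ℕ)`. -/
noncomputable abbrev ell2 : Type := lp (fun _ : ℕ => ℂ) 2

/-- Covariance of a POVM `M` on `ℝⁿ` acting on `L²(Λ)` under a family of unitaries `U`:
`U(q) M(B) U(q)* = M(B + q)`. -/
def IsCovariantPos (n : ℕ) (Λ : Set (Fin n → ℝ))
    (U : (Fin n → ℝ) →
      (Lp ℂ 2 (volume.restrict Λ) ≃ₗᵢ[ℂ] Lp ℂ 2 (volume.restrict Λ)))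
    (M : POVM (Fin n → ℝ) (Lp ℂ 2 (volume.restrict Λ))) : Prop :=
  ∀ q : Fin n → ℝ, ∀ B : Set (Fin n → ℝ), MeasurableSet B →
    ∀ φ ψ : Lp ℂ 2 (volume.restrict Λ),
      ⟪(U q φ : Lp ℂ 2 (volume.restrict Λ)),
          M.toFun ((fun x => x + q) '' B) (U q ψ)⟫ = ⟪φ, M.toFun B ψ⟫

/-- The matrix elements of `M` on `(L¹ ∩ L²)(Λ)` are given by the kernel determined by `ξ`. -/
def MatrixFormula (n : ℕ) (Λ : Set (Fin n → ℝ)) (ξ : (Fin n → ℝ) → ell2)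
    (M : POVM (Fin n → ℝ) (Lp ℂ 2 (volume.restrict Λ))) : Prop :=
  ∀ φ ψ : (Fin n → ℝ) → ℂ,
    Integrable φ (volume.restrict Λ) → Integrable ψ (volume.restrict Λ) →
    ∀ (hφ : MemLp φ 2 (volume.restrict Λ)) (hψ : MemLp ψ 2 (volume.restrict Λ)),
    ∀ B : Set (Fin n → ℝ), MeasurableSet B →
      ⟪hφ.toLp φ, M.toFun B (hψ.toLp ψ)⟫
        = (((2 * Real.pi) ^ n : ℝ) : ℂ)⁻¹ *
          ∫ x in B, (∫ p₁, (∫ p₂,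
              Complex.exp (Complex.I * (∑ k, x k * (p₁ k - p₂ k))) *
                ⟪ξ p₁, ξ p₂⟫ * conj (φ p₁) * ψ p₂
              ∂(volume.restrict Λ)) ∂(volume.restrict Λ))

/-- `M` is an extreme point of the convex set of `U`-covariant POVMs. -/
def IsExtremeCovariantPos (n : ℕ) (Λ : Set (Fin n → ℝ))
    (U : (Fin n → ℝ) →
      (Lp ℂ 2 (volume.restrict Λ) ≃ₗᵢ[ℂ] Lp ℂ 2 (volume.restrict Λ)))
    (M : POVM (Fin n → ℝ) (Lp ℂ 2 (volume.restrict Λ))) : Prop :=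
  ∀ M₁ M₂ : POVM (Fin n → ℝ) (Lp ℂ 2 (volume.restrict Λ)),
    IsCovariantPos n Λ U M₁ → IsCovariantPos n Λ U M₂ →
    ∀ t : ℝ, 0 < t → t < 1 →
    (∀ B : Set (Fin n → ℝ), MeasurableSet B →
      M.toFun B = (t : ℂ) • M₁.toFun B + ((1 - t : ℝ) : ℂ) • M₂.toFun B) →
    ∀ B : Set (Fin n → ℝ), MeasurableSet B →
      M₁.toFun B = M.toFun B ∧ M₂.toFun B = M.toFun B

/-- The closed subspace `𝐇 ⊆ ℓ²(ℕ)` generated by the vectors `∫_Λ φ(p) ξ(p) dp`,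
`φ ∈ (L¹ ∩ L²)(Λ)`. -/
noncomputable def genSubspace (n : ℕ) (Λ : Set (Fin n → ℝ))
    (ξ : (Fin n → ℝ) → ell2) : Submodule ℂ ell2 :=
  (Submodule.span ℂ {v : ell2 | ∃ φ : (Fin n → ℝ) → ℂ,
    Integrable φ (volume.restrict Λ) ∧ MemLp φ 2 (volume.restrict Λ) ∧
      v = ∫ p, φ p • ξ p ∂(volume.restrict Λ)}).topologicalClosure

/-!
With `T φ x = (2π)^(-n/2) ∫ e^(-i(x|p)) φ(p) ξ(p) dp`, the matrix formula reads
`⟨φ, M(B)ψ⟩ = ∫_B ⟨T φ x, T ψ x⟩ dx`, and `T` extends to a bounded map `W` from `L²(Λ)` to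
`L²(ℝⁿ; K)`. So `M(B) = W* (χ_B ⊗ 1) W`, and each positive operator `Q` on `K` with
`⟨ξ(p), Q ξ(p)⟩ = 1` almost everywhere yields a covariant POVM `N(B) = W* (χ_B ⊗ Q) W`. Taking
`Q = 1 ± S` for a self-adjoint contraction `S` with `⟨ξ(p), S ξ(p)⟩ = 0` shows that extremality
implies the condition on operators.

Conversely, let `N ≤ s M` be covariant. Averaging `N` over balls shrinking to `0` along an
ultrafilter gives a form dominated by `s ‖T φ 0‖ ‖T ψ 0‖`, hence `⟨T φ 0, Q (T ψ 0)⟩` for some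
bounded `Q`. By covariance and Besicovitch differentiation `⟨T φ x, Q (T φ x)⟩` is the density
of `⟨φ, N(·)φ⟩`, so `N` is again of the above form, and the condition applied to `Q - 1` on the
generated subspace gives `N = M`.
-/

open Filter Topology ContinuousLinearMap
open scoped ComplexOrder ComplexStarModule FourierTransform ContDiff

section HilbertSpace

variable {K : Type*} [NormedAddCommGroup K] [InnerProductSpace ℂ K]

lemma ext_inner_map_of_dense {D : Set K} (hD : Dense D) {S T : K →L[ℂ] K}
    (h : ∀ x ∈ D, ⟪x, S x⟫ = ⟪x, T x⟫) : S = T := by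
  have h' : ∀ x, ⟪x, S x⟫ = ⟪x, T x⟫ :=
    congrFun (Continuous.ext_on hD (by fun_prop) (by fun_prop) h)
  refine coe_injective ((ext_inner_map _ _).1 fun x => ?_)
  simpa only [coe_coe, inner_conj_symm] using congrArg conj (h' x)

/-- `A` is an operator on the subspace `S`, regarded as an operator on the ambient space that
vanishes on the orthogonal complement of `S`. -/
def IsSupportedOn (A : K →L[ℂ] K) (S : Submodule ℂ K) : Prop :=
  (∀ v, A v ∈ S) ∧ ∀ v ∈ Sᗮ, A v = 0

lemma isSupportedOn_starProjection (S : Submodule ℂ K) [S.HasOrthogonalProjection] :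
    IsSupportedOn S.starProjection S :=
  ⟨S.starProjection_apply_mem, fun _ hv => S.starProjection_apply_eq_zero_iff.2 hv⟩

namespace IsSupportedOn

variable {A B : K →L[ℂ] K} {S : Submodule ℂ K}

lemma sub (hA : IsSupportedOn A S) (hB : IsSupportedOn B S) : IsSupportedOn (A - B) S :=
  ⟨fun v => S.sub_mem (hA.1 v) (hB.1 v), fun v hv => by
    rw [sub_apply, hA.2 v hv, hB.2 v hv, sub_zero]⟩

lemma eq_zero_of_inner_self_eq_zero [S.HasOrthogonalProjection] (hA : IsSupportedOn A S)
    (h : ∀ v ∈ S, ⟪v, A v⟫ = 0) : A = 0 := by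
  refine ext_inner_map_of_dense dense_univ fun v _ => ?_
  obtain ⟨u, hu, w, hw, rfl⟩ := S.exists_add_mem_mem_orthogonal v
  have hw_left : ⟪w, A u⟫ = 0 := S.inner_left_of_mem_orthogonal (hA.1 u) hw
  rw [map_add, hA.2 w hw, add_zero, inner_add_left, h u hu, hw_left, zero_apply, inner_zero_right,
    add_zero]

end IsSupportedOn

variable [CompleteSpace K]

lemma norm_inner_map_le_of_isPositive {T : K →L[ℂ] K} (hT : T.IsPositive) (x y : K) :
    ‖⟪x, T y⟫‖ ≤ √(⟪x, T x⟫).re * √(⟪y, T y⟫).re := by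
  obtain ⟨R, rfl⟩ :=
    CStarAlgebra.nonneg_iff_eq_star_mul_self.1 ((nonneg_iff_isPositive T).2 hT)
  have h : ∀ u v, ⟪u, (star R * R) v⟫ = ⟪R u, R v⟫ := fun u v => adjoint_inner_right R u (R v)
  have h_sqrt : ∀ u, √(⟪R u, R u⟫).re = ‖R u‖ := fun u => by
    rw [inner_self_eq_norm_sq_to_K]
    norm_cast
    exact Real.sqrt_sq (norm_nonneg _)
  rw [h, h, h, h_sqrt, h_sqrt]
  exact norm_inner_le_norm _ _

lemma inner_star_self (A : K →L[ℂ] K) (v : K) : ⟪v, star A v⟫ = conj ⟪v, A v⟫ := by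
  rw [star_eq_adjoint, adjoint_inner_right, inner_conj_symm]

lemma inner_realPart_self (A : K →L[ℂ] K) (v : K) :
    ⟪v, (ℜ A : K →L[ℂ] K) v⟫ = (⟪v, A v⟫).re := by
  rw [realPart_apply_coe, _root_.smul_apply, _root_.add_apply, inner_smul_right_eq_smul,
    inner_add_right, inner_star_self, Complex.add_conj, Complex.real_smul]
  push_cast
  ring

lemma inner_imaginaryPart_self (A : K →L[ℂ] K) (v : K) :
    ⟪v, (ℑ A : K →L[ℂ] K) v⟫ = (⟪v, A v⟫).im := by
  rw [imaginaryPart_apply_coe, _root_.smul_apply, _root_.smul_apply, _root_.sub_apply,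
    inner_smul_right, inner_smul_right_eq_smul, inner_sub_right, inner_star_self,
    Complex.sub_conj, Complex.real_smul]
  push_cast
  linear_combination -(⟪v, A v⟫).im * Complex.I_sq

lemma isPositive_one_add {S : K →L[ℂ] K} (hS : IsSelfAdjoint S) (hS1 : ‖S‖ ≤ 1) :
    (1 + S).IsPositive := by
  refine ((nonneg_iff_isPositive _).1 ?_)
  have h : -algebraMap ℝ (K →L[ℂ] K) 1 ≤ S :=
    (neg_le_neg (algebraMap_mono _ hS1)).trans hS.neg_algebraMap_norm_le_self
  rwa [map_one, neg_le_iff_add_nonneg'] at h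

section SesquilinearForm

variable {V : Type*} [AddCommGroup V] [Module ℂ V]

lemma exists_inner_map_eq_of_denseRange {J : V →ₗ[ℂ] K} (hJ : DenseRange J)
    (b : V →ₗ⋆[ℂ] V →ₗ[ℂ] ℂ) {C : ℝ} (hC : 0 ≤ C) (hb : ∀ φ ψ, ‖b φ ψ‖ ≤ C * ‖J φ‖ * ‖J ψ‖) :
    ∃ A : K →L[ℂ] K, ∀ φ ψ, ⟪J φ, A (J ψ)⟫ = b φ ψ := by
  have h_right : ∀ φ ψ, (b φ).extendOfNorm J (J ψ) = b φ ψ := fun φ ψ =>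
    LinearMap.extendOfNorm_eq hJ ⟨C * ‖J φ‖, hb φ⟩ ψ
  have h_ext : ∀ {f g : K →L[ℂ] ℂ}, (∀ ψ, f (J ψ) = g (J ψ)) → f = g := fun {f g} h =>
    ContinuousLinearMap.ext (congrFun (hJ.equalizer f.continuous g.continuous (funext h)))
  let b' : V →ₗ⋆[ℂ] K →L[ℂ] ℂ :=
    { toFun φ := (b φ).extendOfNorm J
      map_add' φ φ' := h_ext fun ψ => (h_right _ ψ).trans (by simp [h_right])
      map_smul' c φ := h_ext fun ψ => (h_right _ ψ).trans (by simp [h_right]) }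
  have hb' : ∀ φ, ‖b' φ‖ ≤ C * ‖J φ‖ := fun φ =>
    LinearMap.opNorm_extendOfNorm_le hJ (by positivity) (hb φ)
  refine ⟨adjoint (InnerProductSpace.continuousLinearMapOfBilin (b'.extendOfNorm J)),
    fun φ ψ => ?_⟩
  rw [adjoint_inner_right, InnerProductSpace.continuousLinearMapOfBilin_apply,
    LinearMap.extendOfNorm_eq hJ ⟨C, hb'⟩]
  exact h_right φ ψ

lemma exists_isSupportedOn_inner_map_eq (J : V →ₗ[ℂ] K) (b : V →ₗ⋆[ℂ] V →ₗ[ℂ] ℂ) {C : ℝ}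
    (hC : 0 ≤ C) (hb : ∀ φ ψ, ‖b φ ψ‖ ≤ C * ‖J φ‖ * ‖J ψ‖) :
    ∃ A : K →L[ℂ] K, IsSupportedOn A (LinearMap.range J).topologicalClosure ∧
      ∀ φ ψ, ⟪J φ, A (J ψ)⟫ = b φ ψ := by
  set S := (LinearMap.range J).topologicalClosure
  have hJS : ∀ φ, J φ ∈ S := fun φ =>
    Submodule.le_topologicalClosure _ (LinearMap.mem_range_self J φ)
  have : CompleteSpace S := (Submodule.isClosed_topologicalClosure _).completeSpace_coe
  have hJ_dense : DenseRange (J.codRestrict S hJS) := by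
    rw [DenseRange, Subtype.dense_iff, ← range_comp]
    exact fun v hv => hv
  obtain ⟨A, hA⟩ := exists_inner_map_eq_of_denseRange hJ_dense b hC hb
  refine ⟨S.subtypeL ∘L A ∘L S.orthogonalProjectionOnto, ⟨fun v => (A _).2, fun v hv => ?_⟩,
    fun φ ψ => ?_⟩
  · simp [Submodule.orthogonalProjectionOnto_apply_of_mem_orthogonal hv]
  · rw [← hA φ ψ]
    exact congrArg (fun v : S => ⟪J φ, (A v : K)⟫)
      (S.orthogonalProjectionOnto_mem_subspace_eq_self (J.codRestrict S hJS ψ))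

lemma exists_isSupportedOn_tendsto_inner_map {α : Type*} (G : Ultrafilter α) (J : V →ₗ[ℂ] K)
    (a : α → V →ₗ⋆[ℂ] V →ₗ[ℂ] ℂ) {C : ℝ} (hC : 0 ≤ C) (ha : ∀ φ ψ, ∃ β : α → ℝ,
      Tendsto β G (𝓝 (C * ‖J φ‖ * ‖J ψ‖)) ∧ ∀ᶠ i in G, ‖a i φ ψ‖ ≤ β i) :
    ∃ A : K →L[ℂ] K, IsSupportedOn A (LinearMap.range J).topologicalClosure ∧
      ∀ φ ψ, Tendsto (fun i => a i φ ψ) G (𝓝 ⟪J φ, A (J ψ)⟫) := by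
  have h_lim : ∀ φ ψ, ∃ z, Tendsto (fun i => a i φ ψ) G (𝓝 z) := fun φ ψ => by
    obtain ⟨β, hβ, hle⟩ := ha φ ψ
    have h_mem : ∀ᶠ i in G, a i φ ψ ∈ Metric.closedBall 0 (C * ‖J φ‖ * ‖J ψ‖ + 1) := by
      filter_upwards [hle, hβ.eventually (eventually_le_nhds (lt_add_one _))] with i h₁ h₂
      exact mem_closedBall_zero_iff.2 (h₁.trans h₂)
    obtain ⟨z, -, hz⟩ := (isCompact_closedBall (0 : ℂ) _).ultrafilter_le_nhds'
      (G.map fun i => a i φ ψ) h_mem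
    exact ⟨z, hz⟩
  choose b hb using h_lim
  let b' : V →ₗ⋆[ℂ] V →ₗ[ℂ] ℂ := LinearMap.mk₂'ₛₗ (starRingEnd ℂ) (RingHom.id ℂ) b
    (fun φ φ' ψ => tendsto_nhds_unique (hb _ ψ) (by simpa using (hb φ ψ).add (hb φ' ψ)))
    (fun c φ ψ => tendsto_nhds_unique (hb _ ψ) (by simpa using (hb φ ψ).const_mul (conj c)))
    (fun φ ψ ψ' => tendsto_nhds_unique (hb φ _) (by simpa using (hb φ ψ).add (hb φ ψ')))
    (fun c φ ψ => tendsto_nhds_unique (hb φ _) (by simpa using (hb φ ψ).const_mul c))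
  have hb' : ∀ φ ψ, ‖b' φ ψ‖ ≤ C * ‖J φ‖ * ‖J ψ‖ := fun φ ψ =>
    let ⟨_, hβ, hle⟩ := ha φ ψ
    le_of_tendsto_of_tendsto (hb φ ψ).norm hβ hle
  obtain ⟨A, hA, hAb⟩ := exists_isSupportedOn_inner_map_eq J b' hC hb'
  exact ⟨A, hA, fun φ ψ => hAb φ ψ ▸ hb φ ψ⟩

end SesquilinearForm

end HilbertSpace

section Differentiation

variable {X : Type*} [MetricSpace X] [MeasurableSpace X] [BorelSpace X] {μ : Measure X}

lemma tendsto_setAverage_closedBall {E : Type*} [NormedAddCommGroup E] [NormedSpace ℝ E]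
    [CompleteSpace E] [ProperSpace X] [IsFiniteMeasureOnCompacts μ] [μ.IsOpenPosMeasure]
    {f : X → E} (hf : Continuous f) (x : X) :
    Tendsto (fun r => ⨍ y in Metric.closedBall x r, f y ∂μ) (𝓝[>] 0) (𝓝 (f x)) := by
  refine Metric.nhds_basis_closedBall.tendsto_right_iff.2 fun ε hε => ?_
  obtain ⟨δ, hδ, hδε⟩ := Metric.nhds_basis_closedBall.mem_iff.1
    (hf.continuousAt.preimage_mem_nhds (Metric.closedBall_mem_nhds (f x) hε))
  filter_upwards [Ioc_mem_nhdsGT hδ] with r hr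
  refine (convex_closedBall (f x) ε).set_average_mem Metric.isClosed_closedBall
    (Metric.measure_closedBall_pos μ x hr.1).ne' (isCompact_closedBall x r).measure_ne_top
    ?_ (hf.continuousOn.integrableOn_compact (isCompact_closedBall x r))
  filter_upwards [ae_restrict_mem measurableSet_closedBall] with y hy
  exact hδε (Metric.closedBall_subset_closedBall hr.2 hy)

lemma eq_withDensity_of_tendsto_closedBall [ProperSpace X] [HasBesicovitchCovering X]
    [IsLocallyFiniteMeasure μ] [μ.IsOpenPosMeasure] {ν : Measure X} [IsLocallyFiniteMeasure ν]
    (hνμ : ν ≪ μ) {l : Filter ℝ} [l.NeBot] (hl : l ≤ 𝓝[>] 0) {g : X → ℝ}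
    (hg : ∀ x, Tendsto (fun r => (μ.real (Metric.closedBall x r))⁻¹ *
      ν.real (Metric.closedBall x r)) l (𝓝 (g x))) :
    ν = μ.withDensity fun x => ENNReal.ofReal (g x) := by
  rw [← Measure.withDensity_rnDeriv_eq ν μ hνμ]
  refine withDensity_congr_ae ?_
  filter_upwards [Besicovitch.ae_tendsto_rnDeriv ν μ] with x hx
  refine tendsto_nhds_unique (hx.mono_left hl) ((ENNReal.tendsto_ofReal (hg x)).congr' ?_)
  filter_upwards [hl self_mem_nhdsWithin] with r hr
  have h_pos : 0 < μ.real (Metric.closedBall x r) :=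
    ENNReal.toReal_pos (Metric.measure_closedBall_pos μ x hr).ne' measure_closedBall_lt_top.ne
  rw [inv_mul_eq_div, ENNReal.ofReal_div_of_pos h_pos,
    ofReal_measureReal measure_closedBall_lt_top.ne,
    ofReal_measureReal measure_closedBall_lt_top.ne]

end Differentiation

section FieldSubspace

variable {X : Type*} [MeasurableSpace X] {K : Type*} [NormedAddCommGroup K]
  [InnerProductSpace ℂ K]

/-- The closed subspace generated by a field `ξ` of vectors, that is, by the vectors
`∫ φ • ξ ∂μ` with `φ` in `L¹ ∩ L²`; for `μ` the Lebesgue measure on `Λ` and `K = ℓ²(ℕ)` it is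
`genSubspace`. -/
noncomputable def fieldSubspace (μ : Measure X) (ξ : X → K) : Submodule ℂ K :=
  (Submodule.span ℂ {v : K | ∃ φ : X → ℂ,
    Integrable φ μ ∧ MemLp φ 2 μ ∧ v = ∫ p, φ p • ξ p ∂μ}).topologicalClosure

/-- The subspace `L¹ ∩ L²` of `L²`. -/
def integrableSubmodule (μ : Measure X) : Submodule ℂ (Lp ℂ 2 μ) where
  carrier := {φ | Integrable φ μ}
  add_mem' {φ ψ} hφ hψ := (hφ.add hψ).congr (Lp.coeFn_add φ ψ).symm
  zero_mem' := (integrable_zero _ _ _).congr (Lp.coeFn_zero ℂ 2 μ).symm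
  smul_mem' c φ hφ := (hφ.smul c).congr (Lp.coeFn_smul c φ).symm

variable {μ : Measure X}

lemma toLp_mem_integrableSubmodule {φ : X → ℂ} (hφ : Integrable φ μ) (hφ2 : MemLp φ 2 μ) :
    hφ2.toLp φ ∈ integrableSubmodule μ :=
  hφ.congr hφ2.coeFn_toLp.symm

lemma dense_integrableSubmodule : Dense (integrableSubmodule μ : Set (Lp ℂ 2 μ)) := by
  refine (Lp.simpleFunc.denseRange (E := ℂ) (μ := μ) (p := 2) (by norm_num)).mono ?_
  rintro _ ⟨f, rfl⟩
  exact ((SimpleFunc.memLp_iff_integrable (by norm_num) (by norm_num)).1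
    (Lp.simpleFunc.memLp f)).congr (Lp.simpleFunc.toSimpleFunc_eq_toFun f)

variable {ξ : X → K}

lemma integrable_smul_field (hξ : MemLp ξ ⊤ μ) (φ : integrableSubmodule μ) :
    Integrable (fun p => φ.1 p • ξ p) μ :=
  Integrable.smul_of_top_left φ.2 hξ

lemma memLp_two_smul_field (hξ : MemLp ξ ⊤ μ) (φ : integrableSubmodule μ) :
    MemLp (fun p => φ.1 p • ξ p) 2 μ :=
  hξ.smul (Lp.memLp φ.1)

lemma isClosed_fieldSubspace : IsClosed (fieldSubspace μ ξ : Set K) :=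
  Submodule.isClosed_topologicalClosure _

instance [CompleteSpace K] : CompleteSpace (fieldSubspace μ ξ) :=
  isClosed_fieldSubspace.completeSpace_coe

lemma integral_smul_mem_fieldSubspace {φ : X → ℂ} (hφ : Integrable φ μ) (hφ2 : MemLp φ 2 μ) :
    ∫ p, φ p • ξ p ∂μ ∈ fieldSubspace μ ξ :=
  Submodule.le_topologicalClosure _ (Submodule.subset_span ⟨φ, hφ, hφ2, rfl⟩)

lemma ae_mem_fieldSubspace [CompleteSpace K] [SigmaFinite μ] (hξ : MemLp ξ ⊤ μ) :
    ∀ᵐ p ∂μ, ξ p ∈ fieldSubspace μ ξ := by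
  set P := (fieldSubspace μ ξ).starProjection
  have h_int : ∀ s, MeasurableSet s → μ s < ⊤ → IntegrableOn ξ s μ := fun s _ hsμ =>
    have : IsFiniteMeasure (μ.restrict s) := ⟨by simpa using hsμ⟩
    (hξ.restrict s).integrable le_top
  have h_fixed : ∀ s, MeasurableSet s → μ s < ⊤ → P (∫ p in s, ξ p ∂μ) = ∫ p in s, ξ p ∂μ := by
    intro s hs hsμ
    refine Submodule.starProjection_eq_self_iff.2 ?_
    have h := integral_smul_mem_fieldSubspace (ξ := ξ)
      ((integrable_indicator_iff hs).2 (integrableOn_const (C := (1 : ℂ)) hsμ.ne))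
      (memLp_indicator_const 2 hs 1 (Or.inr hsμ.ne))
    simpa only [← indicator_smul_left, one_smul, integral_indicator hs] using h
  have h_zero : (fun p => P (ξ p) - ξ p) =ᵐ[μ] 0 := by
    refine ae_eq_zero_of_forall_setIntegral_eq_of_sigmaFinite
      (fun s hs hsμ => (P.integrable_comp (h_int s hs hsμ)).sub (h_int s hs hsμ))
      fun s hs hsμ => ?_
    rw [integral_sub (P.integrable_comp (h_int s hs hsμ)) (h_int s hs hsμ),
      P.integral_comp_comm (h_int s hs hsμ), h_fixed s hs hsμ, sub_self]
  filter_upwards [h_zero] with p hp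
  exact Submodule.starProjection_eq_self_iff.1 (sub_eq_zero.1 hp)

end FieldSubspace

section Fourier

lemma inner_integral_integral {X Y F : Type*} [MeasurableSpace X] [MeasurableSpace Y]
    [NormedAddCommGroup F] [InnerProductSpace ℂ F] [CompleteSpace F] {μ : Measure X}
    {ν : Measure Y} {f : X → F} {g : Y → F} (hf : Integrable f μ) (hg : Integrable g ν) :
    ⟪∫ x, f x ∂μ, ∫ y, g y ∂ν⟫ = ∫ x, ∫ y, ⟪f x, g y⟫ ∂ν ∂μ := by
  simp only [integral_inner hg]
  rw [← inner_conj_symm, ← integral_inner hf, ← integral_conj]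
  simp only [inner_conj_symm]

section InnerProductSpace

variable {V F : Type*} [NormedAddCommGroup V] [InnerProductSpace ℝ V] [FiniteDimensional ℝ V]
  [MeasurableSpace V] [BorelSpace V] [NormedAddCommGroup F] [InnerProductSpace ℂ F]
  [CompleteSpace F] {g h : V → F}

lemma integral_smul_fourier_toLp (f : SchwartzMap V ℂ) (hg : Integrable g) (hg2 : MemLp g 2) :
    ∫ x, f x • (𝓕 (hg2.toLp g) : Lp F 2 volume) x = ∫ x, f x • 𝓕 g x := by
  have h_distr := congrArg (fun T => T f) (Lp.fourier_toTemperedDistribution_eq (hg2.toLp g))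
  simp only [TemperedDistribution.fourier_apply, Lp.toTemperedDistribution_apply,
    SchwartzMap.fourier_coe] at h_distr
  have h_flip := VectorFourier.integral_fourierIntegral_smul_eq_flip (L := innerₗ V)
    (μ := volume) (ν := volume) Real.continuous_fourierChar continuous_inner f.integrable hg
  rw [flip_innerₗ] at h_flip
  calc ∫ x, f x • (𝓕 (hg2.toLp g) : Lp F 2 volume) x
      = ∫ x, 𝓕 (f : V → ℂ) x • hg2.toLp g x := h_distr.symm
    _ = ∫ x, 𝓕 (f : V → ℂ) x • g x :=
      integral_congr_ae (hg2.coeFn_toLp.mono fun x hx => congrArg _ hx)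
    _ = ∫ x, f x • 𝓕 g x := h_flip

omit [CompleteSpace F] in
lemma continuous_fourier (hg : Integrable g) : Continuous (𝓕 g) :=
  VectorFourier.fourierIntegral_continuous Real.continuous_fourierChar continuous_inner hg

lemma fourier_toLp_ae_eq (hg : Integrable g) (hg2 : MemLp g 2) :
    (𝓕 (hg2.toLp g) : Lp F 2 volume) =ᵐ[volume] 𝓕 g := by
  refine ae_eq_of_integral_contDiff_smul_eq ((Lp.memLp _).locallyIntegrable (by norm_num))
    (continuous_fourier hg).locallyIntegrable fun f hf hf_supp => ?_
  have hf_supp' : HasCompactSupport (Complex.ofRealCLM ∘ f) := hf_supp.comp_left rfl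
  have hf' : ContDiff ℝ ∞ (Complex.ofRealCLM ∘ f) := by fun_prop
  simpa using integral_smul_fourier_toLp (hf_supp'.toSchwartzMap hf') hg hg2

lemma memLp_two_fourier (hg : Integrable g) (hg2 : MemLp g 2) : MemLp (𝓕 g) 2 :=
  (memLp_congr_ae (fourier_toLp_ae_eq hg hg2)).1 (Lp.memLp _)

lemma integral_inner_fourier_fourier (hg : Integrable g) (hg2 : MemLp g 2) (hh : Integrable h)
    (hh2 : MemLp h 2) : ∫ x, ⟪𝓕 g x, 𝓕 h x⟫ = ∫ x, ⟪g x, h x⟫ := by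
  have h_planch := Lp.inner_fourier_eq (hg2.toLp g) (hh2.toLp h)
  rw [L2.inner_def, L2.inner_def] at h_planch
  calc ∫ x, ⟪𝓕 g x, 𝓕 h x⟫
      = ∫ x, ⟪(𝓕 (hg2.toLp g) : Lp F 2 volume) x, (𝓕 (hh2.toLp h) : Lp F 2 volume) x⟫ := by
        refine integral_congr_ae ?_
        filter_upwards [fourier_toLp_ae_eq hg hg2, fourier_toLp_ae_eq hh hh2] with x hx hx'
        rw [hx, hx']
    _ = ∫ x, ⟪hg2.toLp g x, hh2.toLp h x⟫ := h_planch
    _ = ∫ x, ⟪g x, h x⟫ := by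
        refine integral_congr_ae ?_
        filter_upwards [hg2.coeFn_toLp, hh2.coeFn_toLp] with x hx hx'
        rw [hx, hx']

end InnerProductSpace

variable {ι : Type*} [Fintype ι] {F : Type*} [NormedAddCommGroup F] [InnerProductSpace ℂ F]
  {μ : Measure (ι → ℝ)} {g h : (ι → ℝ) → F}

/-- The Fourier transform with the unitary normalisation,
`(2π)^(-n/2) ∫ e^{-i(x|p)} g(p) dμ(p)` for `n` the dimension. -/
noncomputable def unitaryFourier (μ : Measure (ι → ℝ)) (g : (ι → ℝ) → F) (x : ι → ℝ) : F :=
  (√(2 * Real.pi) ^ Fintype.card ι)⁻¹ •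
    VectorFourier.fourierIntegral Real.probChar μ (dotProductBilin ℝ ℝ) g x

lemma unitaryFourier_apply (x : ι → ℝ) :
    unitaryFourier μ g x = (√(2 * Real.pi) ^ Fintype.card ι)⁻¹ •
      ∫ p, Complex.exp (-(Complex.I * ∑ k, x k * p k)) • g p ∂μ := by
  simp only [unitaryFourier, VectorFourier.fourierIntegral_probChar, dotProductBilin_apply_apply,
    dotProduct, mul_comm, mul_neg]

lemma unitaryFourier_congr_ae (hgh : g =ᵐ[μ] h) : unitaryFourier μ g = unitaryFourier μ h :=
  funext fun _ => congrArg _ (congrFun (VectorFourier.fourierIntegral_congr_ae _ _ _ hgh) _)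

lemma continuous_dotProductBilin :
    Continuous fun p : (ι → ℝ) × (ι → ℝ) => dotProductBilin ℝ ℝ p.1 p.2 := by
  simp only [dotProductBilin_apply_apply]
  fun_prop

lemma continuous_unitaryFourier (hg : Integrable g μ) : Continuous (unitaryFourier μ g) :=
  (VectorFourier.fourierIntegral_continuous Real.continuous_probChar continuous_dotProductBilin
    hg).const_smul _

lemma unitaryFourier_add (hg : Integrable g μ) (hh : Integrable h μ) :
    unitaryFourier μ (g + h) = unitaryFourier μ g + unitaryFourier μ h := by
  ext x
  simp only [unitaryFourier, VectorFourier.fourierIntegral_add Real.continuous_probChar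
    continuous_dotProductBilin hg hh, Pi.add_apply, smul_add]

lemma unitaryFourier_const_smul (c : ℂ) :
    unitaryFourier μ (c • g) = c • unitaryFourier μ g := by
  ext x
  simp only [unitaryFourier, VectorFourier.fourierIntegral_const_smul, Pi.smul_apply, smul_comm c]

lemma unitaryFourier_zero :
    unitaryFourier μ g 0 = (√(2 * Real.pi) ^ Fintype.card ι)⁻¹ • ∫ p, g p ∂μ := by
  simp [unitaryFourier_apply]

lemma unitaryFourier_exp_smul (q x : ι → ℝ) :
    unitaryFourier μ (fun p => Complex.exp (Complex.I * ∑ k, q k * p k) • g p) x =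
      unitaryFourier μ g (x - q) := by
  simp only [unitaryFourier_apply, smul_smul, ← Complex.exp_add]
  congr! 5 with p
  simp only [Pi.sub_apply, sub_mul, Finset.sum_sub_distrib, Complex.ofReal_sub]
  ring

lemma memLp_exp_smul {r : ENNReal} (hg : MemLp g r μ) (x : ι → ℝ) :
    MemLp (fun p => Complex.exp (-(Complex.I * ∑ k, x k * p k)) • g p) r μ := by
  refine hg.smul (memLp_top_of_bound (Continuous.aestronglyMeasurable (by fun_prop)) 1
    (.of_forall fun p => ?_))
  rw [Complex.norm_exp]
  simp [Complex.mul_re]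

lemma integrable_exp_smul (hg : Integrable g μ) (x : ι → ℝ) :
    Integrable (fun p => Complex.exp (-(Complex.I * ∑ k, x k * p k)) • g p) μ :=
  memLp_one_iff_integrable.1 (memLp_exp_smul (memLp_one_iff_integrable.2 hg) x)

lemma map_unitaryFourier [CompleteSpace F] (A : F →L[ℂ] F) (hg : Integrable g μ) (x : ι → ℝ) :
    A (unitaryFourier μ g x) = unitaryFourier μ (fun p => A (g p)) x := by
  simp only [unitaryFourier_apply, A.map_smul_of_tower,
    ← A.integral_comp_comm (integrable_exp_smul hg x)]

lemma inner_unitaryFourier [CompleteSpace F] (hg : Integrable g μ) (hh : Integrable h μ)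
    (x : ι → ℝ) :
    ⟪unitaryFourier μ g x, unitaryFourier μ h x⟫ =
      (((2 * Real.pi) ^ Fintype.card ι : ℝ) : ℂ)⁻¹ * ∫ p₁, ∫ p₂,
        Complex.exp (Complex.I * ∑ k, x k * (p₁ k - p₂ k)) * ⟪g p₁, h p₂⟫ ∂μ ∂μ := by
  have h_const : (√(2 * Real.pi) ^ Fintype.card ι)⁻¹ * (√(2 * Real.pi) ^ Fintype.card ι)⁻¹ =
      ((2 * Real.pi) ^ Fintype.card ι)⁻¹ := by
    rw [← mul_inv, ← mul_pow, Real.mul_self_sqrt (by positivity)]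
  have h_exp : ∀ p₁ p₂ : ι → ℝ, conj (Complex.exp (-(Complex.I * ∑ k, x k * p₁ k))) *
      Complex.exp (-(Complex.I * ∑ k, x k * p₂ k)) =
        Complex.exp (Complex.I * ∑ k, x k * (p₁ k - p₂ k)) := fun p₁ p₂ => by
    rw [← Complex.exp_conj, ← Complex.exp_add]
    simp only [map_neg, map_mul, Complex.conj_I, Complex.conj_ofReal, mul_sub,
      Finset.sum_sub_distrib, Complex.ofReal_sub]
    ring_nf
  simp_rw [unitaryFourier_apply, inner_smul_left_eq_smul, inner_smul_right_eq_smul, smul_smul,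
    h_const, inner_integral_integral (integrable_exp_smul hg x) (integrable_exp_smul hh x),
    inner_smul_left, inner_smul_right, ← mul_assoc, h_exp, Complex.real_smul, Complex.ofReal_inv]

lemma unitaryFourier_volume_eq_fourier (x : ι → ℝ) :
    unitaryFourier volume g x = (√(2 * Real.pi) ^ Fintype.card ι)⁻¹ •
      𝓕 (g ∘ WithLp.ofLp : EuclideanSpace ℝ ι → F) (WithLp.toLp 2 ((2 * Real.pi)⁻¹ • x)) := by
  rw [unitaryFourier_apply, Real.fourier_eq',
    ← (PiLp.volume_preserving_ofLp ι).integral_comp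
      (MeasurableEquiv.toLp 2 (ι → ℝ)).symm.measurableEmbedding]
  have h_inner : ∀ v : EuclideanSpace ℝ ι,
      2 * Real.pi * inner ℝ v (WithLp.toLp 2 ((2 * Real.pi)⁻¹ • x)) = ∑ k, x k * v k := by
    intro v
    rw [WithLp.toLp_smul, real_inner_smul_right, PiLp.inner_apply]
    simp only [RCLike.inner_apply, conj_trivial]
    field_simp
  simp only [neg_mul, h_inner, Function.comp_apply, Complex.ofReal_neg, mul_comm Complex.I]

variable [CompleteSpace F]

lemma memLp_two_unitaryFourier_volume (hg : Integrable g) (hg2 : MemLp g 2) :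
    MemLp (unitaryFourier volume g) 2 := by
  have h_ofLp := PiLp.volume_preserving_ofLp ι
  have h_fourier := memLp_two_fourier (h_ofLp.integrable_comp_of_integrable hg)
    (hg2.comp_measurePreserving h_ofLp)
  have h_toLp := h_fourier.comp_measurePreserving (PiLp.volume_preserving_toLp ι)
  have h_scale : MemLp ((𝓕 (g ∘ WithLp.ofLp : EuclideanSpace ℝ ι → F) ∘ WithLp.toLp 2) ∘
      fun x => (2 * Real.pi)⁻¹ • x) 2 := by
    refine MemLp.comp_of_map ?_ (measurable_const_smul _).aemeasurable
    rw [Measure.map_addHaar_smul _ (by positivity)]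
    exact h_toLp.smul_measure ENNReal.ofReal_ne_top
  rw [funext unitaryFourier_volume_eq_fourier]
  exact h_scale.const_smul _

lemma integral_inner_unitaryFourier_volume (hg : Integrable g) (hg2 : MemLp g 2)
    (hh : Integrable h) (hh2 : MemLp h 2) :
    ∫ x, ⟪unitaryFourier volume g x, unitaryFourier volume h x⟫ = ∫ p, ⟪g p, h p⟫ := by
  have h_ofLp := PiLp.volume_preserving_ofLp ι
  set G := 𝓕 (g ∘ WithLp.ofLp : EuclideanSpace ℝ ι → F)
  set H := 𝓕 (h ∘ WithLp.ofLp : EuclideanSpace ℝ ι → F)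
  have h_const : |((2 * Real.pi)⁻¹ ^ Fintype.card ι)⁻¹| =
      √(2 * Real.pi) ^ Fintype.card ι * √(2 * Real.pi) ^ Fintype.card ι := by
    rw [← mul_pow, Real.mul_self_sqrt (by positivity), inv_pow, inv_inv,
      abs_of_pos (by positivity)]
  calc ∫ x, ⟪unitaryFourier volume g x, unitaryFourier volume h x⟫
      = (√(2 * Real.pi) ^ Fintype.card ι)⁻¹ • (√(2 * Real.pi) ^ Fintype.card ι)⁻¹ •
          ∫ x, ⟪G (WithLp.toLp 2 ((2 * Real.pi)⁻¹ • x)),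
            H (WithLp.toLp 2 ((2 * Real.pi)⁻¹ • x))⟫ := by
        simp_rw [unitaryFourier_volume_eq_fourier, inner_smul_left_eq_smul,
          inner_smul_right_eq_smul, integral_smul, G, H]
    _ = ∫ x : ι → ℝ, ⟪G (WithLp.toLp 2 x), H (WithLp.toLp 2 x)⟫ := by
        rw [Measure.integral_comp_smul volume fun x => ⟪G (WithLp.toLp 2 x), H (WithLp.toLp 2 x)⟫,
          Module.finrank_fintype_fun_eq_card, h_const, mul_smul, inv_smul_smul₀ (by positivity),
          inv_smul_smul₀ (by positivity)]
    _ = ∫ v, ⟪G v, H v⟫ :=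
        (PiLp.volume_preserving_toLp ι).integral_comp
          (MeasurableEquiv.toLp 2 _).measurableEmbedding fun v => ⟪G v, H v⟫
    _ = ∫ v : EuclideanSpace ℝ ι, ⟪g (WithLp.ofLp v), h (WithLp.ofLp v)⟫ :=
        integral_inner_fourier_fourier (h_ofLp.integrable_comp_of_integrable hg)
          (hg2.comp_measurePreserving h_ofLp) (h_ofLp.integrable_comp_of_integrable hh)
          (hh2.comp_measurePreserving h_ofLp)
    _ = ∫ p, ⟪g p, h p⟫ :=
        h_ofLp.integral_comp (MeasurableEquiv.toLp 2 (ι → ℝ)).symm.measurableEmbedding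
          fun p => ⟪g p, h p⟫

variable {Λ : Set (ι → ℝ)}

omit [CompleteSpace F] in
lemma unitaryFourier_restrict (hΛ : MeasurableSet Λ) :
    unitaryFourier (volume.restrict Λ) g = unitaryFourier volume (Λ.indicator g) := by
  ext x
  simp only [unitaryFourier_apply, ← integral_indicator hΛ, ← indicator_smul]

lemma memLp_two_unitaryFourier (hΛ : MeasurableSet Λ) (hg : Integrable g (volume.restrict Λ))
    (hg2 : MemLp g 2 (volume.restrict Λ)) : MemLp (unitaryFourier (volume.restrict Λ) g) 2 := by
  rw [unitaryFourier_restrict hΛ]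
  exact memLp_two_unitaryFourier_volume ((integrable_indicator_iff hΛ).2 hg)
    ((memLp_indicator_iff_restrict hΛ).2 hg2)

lemma integral_inner_unitaryFourier (hΛ : MeasurableSet Λ) (hg : Integrable g (volume.restrict Λ))
    (hg2 : MemLp g 2 (volume.restrict Λ)) (hh : Integrable h (volume.restrict Λ))
    (hh2 : MemLp h 2 (volume.restrict Λ)) :
    ∫ x, ⟪unitaryFourier (volume.restrict Λ) g x, unitaryFourier (volume.restrict Λ) h x⟫ =
      ∫ p in Λ, ⟪g p, h p⟫ := by
  simp only [unitaryFourier_restrict hΛ]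
  rw [integral_inner_unitaryFourier_volume ((integrable_indicator_iff hΛ).2 hg)
    ((memLp_indicator_iff_restrict hΛ).2 hg2) ((integrable_indicator_iff hΛ).2 hh)
    ((memLp_indicator_iff_restrict hΛ).2 hh2), ← integral_indicator hΛ]
  congr 1 with p
  by_cases hp : p ∈ Λ <;> simp [hp]

end Fourier

section Compression

variable {X : Type*} [MeasurableSpace X] {ν : Measure X}
  {K : Type*} [NormedAddCommGroup K] [InnerProductSpace ℂ K]
  {H : Type*} [NormedAddCommGroup H] [InnerProductSpace ℂ H] [CompleteSpace H]

lemma inner_compLpL (Q : K →L[ℂ] K) (f g : Lp K 2 ν) :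
    ⟪f, Q.compLpL 2 ν g⟫ = ∫ x, ⟪f x, Q (g x)⟫ ∂ν := by
  rw [L2.inner_def]
  exact integral_congr_ae ((Q.coeFn_compLpL g).mono fun x hx => congrArg (inner ℂ (f x)) hx)

lemma isPositive_compLpL {Q : K →L[ℂ] K} (hQ : Q.IsPositive) : (Q.compLpL 2 ν).IsPositive := by
  have h_symm : ∀ f g : Lp K 2 ν, ⟪Q.compLpL 2 ν f, g⟫ = ⟪f, Q.compLpL 2 ν g⟫ := fun f g => by
    rw [← inner_conj_symm, inner_compLpL, inner_compLpL, ← integral_conj]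
    congr 1 with x
    rw [inner_conj_symm]
    exact hQ.isSymmetric _ _
  refine (isPositive_iff _).2 ⟨h_symm, fun f => ?_⟩
  rw [h_symm, inner_compLpL]
  exact integral_nonneg fun x => hQ.inner_nonneg_right (f x)

variable [CompleteSpace K]

/-- The compression by `W : H → L²(X; K)` of multiplication by the indicator function of `B`
combined with the operator `Q` acting on the values of the functions. As a function of `B` it is,
for positive `Q`, an operator valued measure given in dilated form. -/
noncomputable def compression (W : H →L[ℂ] Lp K 2 ν) (B : Set X) :
    (K →L[ℂ] K) →ₗ[ℂ] H →L[ℂ] H where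
  toFun Q := adjoint (LpToLpRestrictCLM X K ℂ ν 2 B ∘L W) ∘L Q.compLpL 2 (ν.restrict B) ∘L
    LpToLpRestrictCLM X K ℂ ν 2 B ∘L W
  map_add' Q R := by rw [add_compLpL, add_comp, comp_add]
  map_smul' c Q := by rw [smul_compLpL, smul_comp, comp_smul, RingHom.id_apply]

variable {W : H →L[ℂ] Lp K 2 ν} {Q : K →L[ℂ] K}

lemma inner_compression (B : Set X) (φ ψ : H) :
    ⟪φ, compression W B Q ψ⟫ = ∫ x in B, ⟪W φ x, Q (W ψ x)⟫ ∂ν := by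
  calc ⟪φ, compression W B Q ψ⟫
      = ⟪LpToLpRestrictCLM X K ℂ ν 2 B (W φ),
          Q.compLpL 2 (ν.restrict B) (LpToLpRestrictCLM X K ℂ ν 2 B (W ψ))⟫ := by
        simp only [compression, LinearMap.coe_mk, AddHom.coe_mk, comp_apply, adjoint_inner_right]
    _ = ∫ x in B, ⟪W φ x, Q (W ψ x)⟫ ∂ν := by
        rw [inner_compLpL]
        refine integral_congr_ae ?_
        filter_upwards [LpToLpRestrictCLM_coeFn ℂ B (W φ), LpToLpRestrictCLM_coeFn ℂ B (W ψ)]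
          with x hφ hψ
        rw [hφ, hψ]

lemma isPositive_compression (hQ : Q.IsPositive) (B : Set X) :
    (compression W B Q).IsPositive :=
  (isPositive_compLpL hQ).adjoint_conj _

lemma hasSum_inner_compression {B : ℕ → Set X} (hB : ∀ k, MeasurableSet (B k))
    (hB_disj : Pairwise (Function.onFun Disjoint B)) (φ ψ : H) :
    HasSum (fun k => ⟪φ, compression W (B k) Q ψ⟫) ⟪φ, compression W (⋃ k, B k) Q ψ⟫ := by
  simp only [inner_compression]
  refine hasSum_integral_iUnion hB hB_disj (Integrable.integrableOn ?_)
  refine (L2.integrable_inner (𝕜 := ℂ) (W φ) (Q.compLpL 2 ν (W ψ))).congr ?_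
  exact (Q.coeFn_compLpL (W ψ)).mono fun x hx => congrArg (inner ℂ (W φ x)) hx

/-- The POVM whose effects are the compressions of `Q` by `W`. -/
noncomputable def compressionPOVM (W : H →L[ℂ] Lp K 2 ν) (hQ : Q.IsPositive)
    (hQ1 : compression W univ Q = 1) : POVM X H where
  toFun B := compression W B Q
  isPositive B _ := isPositive_compression hQ B
  normalized := hQ1
  m_iUnion _ := hasSum_inner_compression

end Compression

section Transform

variable {ι : Type*} [Fintype ι] {K : Type*} [NormedAddCommGroup K] [InnerProductSpace ℂ K]
  {μ : Measure (ι → ℝ)} {ξ : (ι → ℝ) → K}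

/-- The transform `φ ↦ ∫ e^{-i(x|p)} φ(p) ξ(p) dμ(p)`, unitarily normalised, by which the kernel
`⟨ξ(p₁), ξ(p₂)⟩` factorises. -/
noncomputable def fieldTransform (hξ : MemLp ξ ⊤ μ) :
    integrableSubmodule μ →ₗ[ℂ] (ι → ℝ) → K where
  toFun φ := unitaryFourier μ fun p => φ.1 p • ξ p
  map_add' φ ψ := by
    rw [← unitaryFourier_add (integrable_smul_field hξ φ) (integrable_smul_field hξ ψ)]
    refine unitaryFourier_congr_ae ((Lp.coeFn_add φ.1 ψ.1).mono fun p hp => ?_)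
    simp only [Submodule.coe_add, hp, Pi.add_apply, add_smul]
  map_smul' c φ := by
    rw [RingHom.id_apply, ← unitaryFourier_const_smul]
    refine unitaryFourier_congr_ae ((Lp.coeFn_smul c φ.1).mono fun p hp => ?_)
    simp only [Submodule.coe_smul, hp, Pi.smul_apply, smul_assoc]

variable (hξ : MemLp ξ ⊤ μ)

lemma continuous_fieldTransform (φ : integrableSubmodule μ) : Continuous (fieldTransform hξ φ) :=
  continuous_unitaryFourier (integrable_smul_field hξ φ)

lemma fieldTransform_mem_fieldSubspace (φ : integrableSubmodule μ) (x : ι → ℝ) :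
    fieldTransform hξ φ x ∈ fieldSubspace μ ξ := by
  simp only [fieldTransform, LinearMap.coe_mk, AddHom.coe_mk, unitaryFourier_apply, ← smul_assoc]
  exact Submodule.smul_of_tower_mem _ _ (integral_smul_mem_fieldSubspace
    (integrable_exp_smul φ.2 x) (memLp_exp_smul (Lp.memLp φ.1) x))

lemma fieldTransform_zero (φ : integrableSubmodule μ) :
    fieldTransform hξ φ 0 = (√(2 * Real.pi) ^ Fintype.card ι)⁻¹ • ∫ p, φ.1 p • ξ p ∂μ :=
  unitaryFourier_zero

lemma topologicalClosure_range_fieldTransform_zero :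
    (LinearMap.range (LinearMap.proj 0 ∘ₗ fieldTransform hξ)).topologicalClosure =
      fieldSubspace μ ξ := by
  set c := (√(2 * Real.pi) ^ Fintype.card ι)⁻¹ with hc
  refine le_antisymm (Submodule.topologicalClosure_minimal _ ?_ isClosed_fieldSubspace)
    (Submodule.topologicalClosure_mono (Submodule.span_le.2 ?_))
  · rintro _ ⟨φ, rfl⟩
    exact fieldTransform_mem_fieldSubspace hξ φ 0
  · rintro _ ⟨φ, hφ, hφ2, rfl⟩
    set ψ : integrableSubmodule μ := ⟨hφ2.toLp φ, toLp_mem_integrableSubmodule hφ hφ2⟩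
    have h_int : ∫ p, ψ.1 p • ξ p ∂μ = ∫ p, φ p • ξ p ∂μ :=
      integral_congr_ae (hφ2.coeFn_toLp.mono fun p hp => congrArg (· • ξ p) hp)
    refine ⟨((c⁻¹ : ℝ) : ℂ) • ψ, ?_⟩
    rw [map_smul, LinearMap.comp_apply, LinearMap.proj_apply, fieldTransform_zero, h_int, ← hc,
      Complex.coe_smul, inv_smul_smul₀ (by positivity)]

lemma tendsto_sqrt_mul_setAverage_norm_sq {s : ℝ} (hs : 0 ≤ s)
    (φ ψ : integrableSubmodule μ) :
    Tendsto (fun r =>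
        √(s * ⨍ x in Metric.closedBall (0 : ι → ℝ) r, ‖fieldTransform hξ φ x‖ ^ 2) *
          √(s * ⨍ x in Metric.closedBall (0 : ι → ℝ) r, ‖fieldTransform hξ ψ x‖ ^ 2))
      (𝓝[>] 0) (𝓝 (s * ‖fieldTransform hξ φ 0‖ * ‖fieldTransform hξ ψ 0‖)) := by
  have h_sqrt : ∀ χ, Tendsto (fun r =>
      √(s * ⨍ x in Metric.closedBall (0 : ι → ℝ) r, ‖fieldTransform hξ χ x‖ ^ 2))
      (𝓝[>] 0) (𝓝 (√s * ‖fieldTransform hξ χ 0‖)) := fun χ => by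
    have h_cont : Continuous fun x => ‖fieldTransform hξ χ x‖ ^ 2 :=
      (continuous_fieldTransform hξ χ).norm.pow 2
    have h := (tendsto_setAverage_closedBall (μ := volume) h_cont 0).const_mul s
    simpa only [Real.sqrt_mul hs, Real.sqrt_sq (norm_nonneg _)] using h.sqrt
  convert (h_sqrt φ).mul (h_sqrt ψ) using 2
  rw [mul_mul_mul_comm, Real.mul_self_sqrt hs, mul_assoc]

/-- The family `U` of unitaries consists of the multiplications by the characters
`e^{i(q|p)}`. -/
def IsModulationRep (μ : Measure (ι → ℝ)) (U : (ι → ℝ) → (Lp ℂ 2 μ ≃ₗᵢ[ℂ] Lp ℂ 2 μ)) : Prop :=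
  ∀ q : ι → ℝ, ∀ φ : Lp ℂ 2 μ,
    (U q φ : (ι → ℝ) → ℂ) =ᵐ[μ] fun p => Complex.exp (Complex.I * (∑ k, q k * p k)) * φ p

variable {U : (ι → ℝ) → (Lp ℂ 2 μ ≃ₗᵢ[ℂ] Lp ℂ 2 μ)}

lemma IsModulationRep.map_mem_integrableSubmodule (hU : IsModulationRep μ U) (q : ι → ℝ)
    (φ : integrableSubmodule μ) : U q φ.1 ∈ integrableSubmodule μ := by
  refine (integrable_exp_smul φ.2 (-q)).congr ((hU q φ.1).mono fun p hp => ?_)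
  simp [hp]

lemma fieldTransform_modulation (hU : IsModulationRep μ U) (q : ι → ℝ)
    (φ : integrableSubmodule μ) (x : ι → ℝ) :
    fieldTransform hξ ⟨U q φ.1, hU.map_mem_integrableSubmodule q φ⟩ x =
      fieldTransform hξ φ (x - q) := by
  simp only [fieldTransform, LinearMap.coe_mk, AddHom.coe_mk, ← unitaryFourier_exp_smul]
  refine congrFun (unitaryFourier_congr_ae ((hU q φ.1).mono fun p hp => ?_)) x
  rw [hp, mul_smul]

end Transform

section Dilation

variable {ι : Type*} [Fintype ι] {Λ : Set (ι → ℝ)} {K : Type*} [NormedAddCommGroup K]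
  [InnerProductSpace ℂ K] [CompleteSpace K] {ξ : (ι → ℝ) → K} (hΛ : MeasurableSet Λ)
  (hξ : MemLp ξ ⊤ (volume.restrict Λ))

include hΛ in
lemma memLp_two_fieldTransform (φ : integrableSubmodule (volume.restrict Λ)) :
    MemLp (fieldTransform hξ φ) 2 :=
  memLp_two_unitaryFourier hΛ (integrable_smul_field hξ φ) (memLp_two_smul_field hξ φ)

include hΛ in
lemma integral_inner_fieldTransform (Q : K →L[ℂ] K)
    (φ ψ : integrableSubmodule (volume.restrict Λ)) :
    ∫ x, ⟪fieldTransform hξ φ x, Q (fieldTransform hξ ψ x)⟫ =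
      ∫ p in Λ, ⟪ξ p, Q (ξ p)⟫ * ⟪φ.1 p, ψ.1 p⟫ := by
  have hψ := integrable_smul_field hξ ψ
  simp only [fieldTransform, LinearMap.coe_mk, AddHom.coe_mk, map_unitaryFourier Q hψ]
  rw [integral_inner_unitaryFourier hΛ (integrable_smul_field hξ φ) (memLp_two_smul_field hξ φ)
    (Q.integrable_comp hψ) (Q.comp_memLp' (memLp_two_smul_field hξ ψ))]
  congr 1 with p
  rw [map_smul, inner_smul_left, inner_smul_right, RCLike.inner_apply]
  ring

/-- The transform `fieldTransform` with values in `L²`. -/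
noncomputable def fieldTransformL2 :
    integrableSubmodule (volume.restrict Λ) →ₗ[ℂ] Lp K 2 (volume : Measure (ι → ℝ)) where
  toFun φ := (memLp_two_fieldTransform hΛ hξ φ).toLp _
  map_add' φ ψ := by simp only [map_add, ← MemLp.toLp_add]
  map_smul' c φ := by simp only [map_smul, ← MemLp.toLp_const_smul, RingHom.id_apply]

lemma fieldTransformL2_ae_eq (φ : integrableSubmodule (volume.restrict Λ)) :
    fieldTransformL2 hΛ hξ φ =ᵐ[volume] fieldTransform hξ φ :=
  (memLp_two_fieldTransform hΛ hξ φ).coeFn_toLp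

lemma norm_fieldTransformL2_le (φ : integrableSubmodule (volume.restrict Λ)) :
    ‖fieldTransformL2 hΛ hξ φ‖ ≤ ‖hξ.toLp ξ‖ * ‖φ.1‖ := by
  set g : Lp K 2 (volume.restrict Λ) := φ.1 • hξ.toLp ξ
  have h_inner : ⟪fieldTransformL2 hΛ hξ φ, fieldTransformL2 hΛ hξ φ⟫ = ⟪g, g⟫ := by
    calc ⟪fieldTransformL2 hΛ hξ φ, fieldTransformL2 hΛ hξ φ⟫
        = ∫ x, ⟪fieldTransform hξ φ x, fieldTransform hξ φ x⟫ := by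
          rw [L2.inner_def]
          refine integral_congr_ae ?_
          filter_upwards [fieldTransformL2_ae_eq hΛ hξ φ] with x hx
          rw [hx]
      _ = ∫ p in Λ, ⟪ξ p, ξ p⟫ * ⟪φ.1 p, φ.1 p⟫ := integral_inner_fieldTransform hΛ hξ 1 φ φ
      _ = ⟪g, g⟫ := by
          rw [L2.inner_def]
          refine integral_congr_ae ?_
          filter_upwards [Lp.coeFn_lpSMul (r := 2) φ.1 (hξ.toLp ξ), hξ.coeFn_toLp] with p hp hξp
          rw [hp, Pi.smul_apply', hξp, inner_smul_left, inner_smul_right, RCLike.inner_apply]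
          ring
  calc ‖fieldTransformL2 hΛ hξ φ‖ = ‖g‖ := by
        rw [@norm_eq_sqrt_re_inner ℂ, h_inner, ← @norm_eq_sqrt_re_inner ℂ]
    _ ≤ ‖hξ.toLp ξ‖ * ‖φ.1‖ := (Lp.norm_smul_le _ _).trans_eq (mul_comm _ _)

/-- The extension of `fieldTransform` by continuity to `L²(Λ)`, which dilates the POVM with
kernel `⟨ξ(p₁), ξ(p₂)⟩`. -/
noncomputable def dilation :
    Lp ℂ 2 (volume.restrict Λ) →L[ℂ] Lp K 2 (volume : Measure (ι → ℝ)) :=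
  (fieldTransformL2 hΛ hξ).extendOfNorm (integrableSubmodule (volume.restrict Λ)).subtype

lemma dilation_ae_eq (φ : integrableSubmodule (volume.restrict Λ)) :
    dilation hΛ hξ φ =ᵐ[volume] fieldTransform hξ φ := by
  rw [show dilation hΛ hξ φ = fieldTransformL2 hΛ hξ φ from
    LinearMap.extendOfNorm_eq dense_integrableSubmodule.denseRange_val
      ⟨_, norm_fieldTransformL2_le hΛ hξ⟩ φ]
  exact fieldTransformL2_ae_eq hΛ hξ φ

variable {Q : K →L[ℂ] K}

lemma inner_compression_dilation (B : Set (ι → ℝ))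
    (φ ψ : integrableSubmodule (volume.restrict Λ)) :
    ⟪φ.1, compression (dilation hΛ hξ) B Q ψ.1⟫ =
      ∫ x in B, ⟪fieldTransform hξ φ x, Q (fieldTransform hξ ψ x)⟫ := by
  rw [inner_compression]
  refine integral_congr_ae (ae_restrict_of_ae ?_)
  filter_upwards [dilation_ae_eq hΛ hξ φ, dilation_ae_eq hΛ hξ ψ] with x hφ hψ
  rw [hφ, hψ]

lemma inner_compression_dilation_univ (φ ψ : integrableSubmodule (volume.restrict Λ)) :
    ⟪φ.1, compression (dilation hΛ hξ) univ Q ψ.1⟫ =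
      ∫ p in Λ, ⟪ξ p, Q (ξ p)⟫ * ⟪φ.1 p, ψ.1 p⟫ := by
  rw [inner_compression_dilation, Measure.restrict_univ, integral_inner_fieldTransform hΛ]

lemma compression_dilation_univ_eq_one (h : ∀ᵐ p ∂(volume.restrict Λ), ⟪ξ p, Q (ξ p)⟫ = 1) :
    compression (dilation hΛ hξ) univ Q = 1 := by
  refine ext_inner_map_of_dense dense_integrableSubmodule fun φ hφ => ?_
  rw [inner_compression_dilation_univ hΛ hξ ⟨φ, hφ⟩ ⟨φ, hφ⟩, one_apply_eq_self, L2.inner_def]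
  refine integral_congr_ae ?_
  filter_upwards [h] with p hp
  rw [hp, one_mul]

lemma ae_inner_eq_one_of_compression_dilation_univ
    (h : compression (dilation hΛ hξ) univ Q = 1) :
    ∀ᵐ p ∂(volume.restrict Λ), ⟪ξ p, Q (ξ p)⟫ = 1 := by
  set μ := volume.restrict Λ
  have h_memLp : MemLp (fun p => ⟪ξ p, Q (ξ p)⟫) ⊤ μ :=
    MemLp.of_bilin (fun v w => ⟪v, w⟫) 1 hξ (Q.comp_memLp' hξ)
      (hξ.1.inner (Q.comp_memLp' hξ).1) (.of_forall fun p => by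
        simpa using nnnorm_inner_le_nnnorm (𝕜 := ℂ) (ξ p) (Q (ξ p)))
  refine ae_eq_of_forall_setIntegral_eq_of_sigmaFinite (fun s _ hs => ?_)
    (fun s _ hs => integrableOn_const hs.ne) fun s hs hsμ => ?_
  · have : IsFiniteMeasure (μ.restrict s) := ⟨by simpa using hs⟩
    exact (h_memLp.restrict s).integrable le_top
  have h_memLp_one : MemLp (s.indicator fun _ => (1 : ℂ)) 2 μ :=
    memLp_indicator_const 2 hs 1 (Or.inr hsμ.ne)
  set φ : integrableSubmodule μ := ⟨h_memLp_one.toLp _, toLp_mem_integrableSubmodule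
    ((integrable_indicator_iff hs).2 (integrableOn_const hsμ.ne)) h_memLp_one⟩ with hφ
  have h_inner : (fun p => ⟪φ.1 p, φ.1 p⟫) =ᵐ[μ] s.indicator fun _ => 1 := by
    filter_upwards [h_memLp_one.coeFn_toLp] with p hp
    by_cases hps : p ∈ s <;> simp [hφ, hp, hps]
  calc ∫ p in s, ⟪ξ p, Q (ξ p)⟫ ∂μ
      = ∫ p, ⟪ξ p, Q (ξ p)⟫ * ⟪φ.1 p, φ.1 p⟫ ∂μ := by
        rw [← integral_indicator hs]
        refine integral_congr_ae ?_
        filter_upwards [h_inner] with p hp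
        rw [hp]
        by_cases hps : p ∈ s <;> simp [hps]
    _ = ⟪φ.1, φ.1⟫ := by rw [← inner_compression_dilation_univ hΛ hξ, h, one_apply_eq_self]
    _ = ∫ _ in s, 1 ∂μ := by
        rw [L2.inner_def, integral_congr_ae h_inner, integral_indicator hs]

lemma inner_compression_dilation_modulation
    {U : (ι → ℝ) → (Lp ℂ 2 (volume.restrict Λ) ≃ₗᵢ[ℂ] Lp ℂ 2 (volume.restrict Λ))}
    (hU : IsModulationRep (volume.restrict Λ) U) (q : ι → ℝ) (B : Set (ι → ℝ))
    (φ ψ : Lp ℂ 2 (volume.restrict Λ)) :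
    ⟪U q φ, compression (dilation hΛ hξ) ((fun x => x + q) '' B) Q (U q ψ)⟫ =
      ⟪φ, compression (dilation hΛ hξ) B Q ψ⟫ := by
  set V : Lp ℂ 2 (volume.restrict Λ) →L[ℂ] Lp ℂ 2 (volume.restrict Λ) :=
    (U q).toContinuousLinearEquiv.toContinuousLinearMap
  set C := compression (dilation hΛ hξ) ((fun x => x + q) '' B) Q
  suffices h : adjoint V ∘L C ∘L V = compression (dilation hΛ hξ) B Q by
    rw [← h, comp_apply, adjoint_inner_right]
    rfl
  refine ext_inner_map_of_dense dense_integrableSubmodule fun φ hφ => ?_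
  set Uφ : integrableSubmodule (volume.restrict Λ) :=
    ⟨U q φ, hU.map_mem_integrableSubmodule q ⟨φ, hφ⟩⟩
  calc ⟪φ, (adjoint V ∘L C ∘L V) φ⟫
      = ⟪Uφ.1, C Uφ.1⟫ := by
        rw [comp_apply, adjoint_inner_right]
        rfl
    _ = ∫ x in (fun x => x + q) '' B, ⟪fieldTransform hξ Uφ x, Q (fieldTransform hξ Uφ x)⟫ :=
        inner_compression_dilation hΛ hξ _ Uφ Uφ
    _ = ∫ x in B, ⟪fieldTransform hξ ⟨φ, hφ⟩ x, Q (fieldTransform hξ ⟨φ, hφ⟩ x)⟫ := by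
        rw [(measurePreserving_add_right volume q).setIntegral_image_emb
          (MeasurableEquiv.addRight q).measurableEmbedding]
        simp only [Uφ, fieldTransform_modulation hξ hU q ⟨φ, hφ⟩, add_sub_cancel_right]
    _ = ⟪φ, compression (dilation hΛ hξ) B Q φ⟫ :=
        (inner_compression_dilation hΛ hξ B ⟨φ, hφ⟩ ⟨φ, hφ⟩).symm

lemma compression_dilation_starProjection (B : Set (ι → ℝ)) :
    compression (dilation hΛ hξ) B (fieldSubspace (volume.restrict Λ) ξ).starProjection =
      compression (dilation hΛ hξ) B 1 := by
  refine ext_inner_map_of_dense dense_integrableSubmodule fun φ hφ => ?_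
  simp only [inner_compression_dilation hΛ hξ B ⟨φ, hφ⟩ ⟨φ, hφ⟩, one_apply_eq_self,
    Submodule.starProjection_eq_self_iff.2 (fieldTransform_mem_fieldSubspace hξ ⟨φ, hφ⟩ _)]

end Dilation

namespace POVM

variable {Ω : Type*} [MeasurableSpace Ω] {H : Type*} [NormedAddCommGroup H]
  [InnerProductSpace ℂ H] [CompleteSpace H] (N : POVM Ω H) (φ : H)

lemma toFun_empty : ⟪φ, N.toFun ∅ φ⟫ = 0 := by
  have h := N.m_iUnion (fun _ => ∅) (fun _ => .empty) (fun _ _ _ => disjoint_bot_left) φ φ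
  exact (summable_const_iff _).1 h.summable

/-- The measure `B ↦ ⟨φ, N(B)φ⟩`. -/
noncomputable def diagMeasure : Measure Ω :=
  Measure.ofMeasurable (fun B _ => ENNReal.ofReal (⟪φ, N.toFun B φ⟫).re)
    (by simp only [toFun_empty, Complex.zero_re, ENNReal.ofReal_zero])
    fun B hB hB_disj => by
      have h := Complex.hasSum_re (N.m_iUnion B hB hB_disj φ φ)
      rw [← h.tsum_eq]
      exact ENNReal.ofReal_tsum_of_nonneg
        (fun k => (N.isPositive _ (hB k)).re_inner_nonneg_right φ) h.summable

variable {B : Set Ω}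

lemma diagMeasure_apply (hB : MeasurableSet B) :
    N.diagMeasure φ B = ENNReal.ofReal (⟪φ, N.toFun B φ⟫).re :=
  Measure.ofMeasurable_apply B hB

instance : IsFiniteMeasure (N.diagMeasure φ) :=
  ⟨by rw [diagMeasure_apply _ _ .univ]; exact ENNReal.ofReal_lt_top⟩

lemma inner_toFun_self (hB : MeasurableSet B) :
    ⟪φ, N.toFun B φ⟫ = (N.diagMeasure φ).real B := by
  have h := (N.isPositive B hB).inner_nonneg_right φ
  rw [Measure.real, diagMeasure_apply N φ hB, ENNReal.toReal_ofReal (Complex.nonneg_iff.1 h).1]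
  exact Complex.eq_re_of_ofReal_le h

end POVM

section Density

variable {n : ℕ} {Λ : Set (Fin n → ℝ)} {K : Type*} [NormedAddCommGroup K]
  [InnerProductSpace ℂ K] [CompleteSpace K] {ξ : (Fin n → ℝ) → K} (hΛ : MeasurableSet Λ)
  (hξ : MemLp ξ ⊤ (volume.restrict Λ)) {N : POVM (Fin n → ℝ) (Lp ℂ 2 (volume.restrict Λ))}
  {s : ℝ}

lemma re_inner_le_setIntegral_norm_sq {B : Set (Fin n → ℝ)}
    {T : Lp ℂ 2 (volume.restrict Λ) →L[ℂ] Lp ℂ 2 (volume.restrict Λ)}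
    (hT : T ≤ (s : ℂ) • compression (dilation hΛ hξ) B 1)
    (φ : integrableSubmodule (volume.restrict Λ)) :
    (⟪φ.1, T φ.1⟫).re ≤ s * ∫ x in B, ‖fieldTransform hξ φ x‖ ^ 2 := by
  have h := ((le_def _ _).1 hT).re_inner_nonneg_right φ.1
  have h_one : ⟪φ.1, compression (dilation hΛ hξ) B 1 φ.1⟫ =
      ((∫ x in B, ‖fieldTransform hξ φ x‖ ^ 2 : ℝ) : ℂ) := by
    rw [inner_compression_dilation, ← integral_complex_ofReal]
    simp only [one_apply_eq_self, inner_self_eq_norm_sq_to_K]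
    push_cast
    rfl
  rw [_root_.sub_apply, _root_.smul_apply, inner_sub_right, inner_smul_right, h_one,
    ← Complex.ofReal_mul, map_sub, sub_nonneg] at h
  exact h

variable (hs : 0 ≤ s)
  (hN : ∀ B, MeasurableSet B → N.toFun B ≤ (s : ℂ) • compression (dilation hΛ hξ) B 1)
include hN

lemma diagMeasure_absolutelyContinuous (φ : integrableSubmodule (volume.restrict Λ)) :
    N.diagMeasure φ.1 ≪ volume := by
  refine Measure.AbsolutelyContinuous.mk fun B hB hB0 => ?_
  rw [N.diagMeasure_apply φ.1 hB]
  refine ENNReal.ofReal_of_nonpos ((re_inner_le_setIntegral_norm_sq hΛ hξ (hN B hB) φ).trans_eq ?_)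
  rw [Measure.restrict_eq_zero.2 hB0, integral_zero_measure, mul_zero]

include hs in
lemma exists_isSupportedOn_tendsto_inner_closedBall {G : Ultrafilter ℝ}
    (hG : (G : Filter ℝ) ≤ 𝓝[>] 0) :
    ∃ Q : K →L[ℂ] K, IsSupportedOn Q (fieldSubspace (volume.restrict Λ) ξ) ∧
      ∀ φ ψ : integrableSubmodule (volume.restrict Λ),
        Tendsto (fun r => (((volume.real (Metric.closedBall (0 : Fin n → ℝ) r))⁻¹ : ℝ) : ℂ) *
            ⟪φ.1, N.toFun (Metric.closedBall 0 r) ψ.1⟫) G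
          (𝓝 ⟪fieldTransform hξ φ 0, Q (fieldTransform hξ ψ 0)⟫) := by
  set T : ℝ → Lp ℂ 2 (volume.restrict Λ) →L[ℂ] Lp ℂ 2 (volume.restrict Λ) := fun r =>
    (((volume.real (Metric.closedBall (0 : Fin n → ℝ) r))⁻¹ : ℝ) : ℂ) •
      N.toFun (Metric.closedBall 0 r) with hT
  set m : integrableSubmodule (volume.restrict Λ) → ℝ → ℝ := fun φ r =>
    s * ⨍ x in Metric.closedBall (0 : Fin n → ℝ) r, ‖fieldTransform hξ φ x‖ ^ 2
  have hT_pos : ∀ r, (T r).IsPositive := fun r =>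
    (N.isPositive _ measurableSet_closedBall).smul_of_nonneg
      (Complex.zero_le_real.2 (inv_nonneg.2 measureReal_nonneg))
  have hTm : ∀ φ r, (⟪φ.1, T r φ.1⟫).re ≤ m φ r := fun φ r => by
    have h := re_inner_le_setIntegral_norm_sq hΛ hξ
      (hN (Metric.closedBall 0 r) measurableSet_closedBall) φ
    simp only [m, hT, _root_.smul_apply, inner_smul_right, Complex.re_ofReal_mul, setAverage_eq,
      smul_eq_mul]
    rw [mul_left_comm s]
    gcongr
  obtain ⟨Q, hQ, hQ_lim⟩ := exists_isSupportedOn_tendsto_inner_map G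
    (LinearMap.proj 0 ∘ₗ fieldTransform hξ)
    (fun r => ((innerₛₗ ℂ).compl₂ (T r).toLinearMap).domRestrict₁₂ _ _) hs fun φ ψ =>
      ⟨fun r => √(m φ r) * √(m ψ r),
        (tendsto_sqrt_mul_setAverage_norm_sq hξ hs φ ψ).mono_left hG, .of_forall fun r =>
        (norm_inner_map_le_of_isPositive (hT_pos r) φ.1 ψ.1).trans
          (mul_le_mul (Real.sqrt_le_sqrt (hTm φ r)) (Real.sqrt_le_sqrt (hTm ψ r))
            (Real.sqrt_nonneg _) (Real.sqrt_nonneg _))⟩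
  refine ⟨Q, topologicalClosure_range_fieldTransform_zero hξ ▸ hQ, fun φ ψ => ?_⟩
  exact (hQ_lim φ ψ).congr fun r => inner_smul_right φ.1 (N.toFun _ ψ.1) _

end Density

section Representation

variable {n : ℕ} {Λ : Set (Fin n → ℝ)} {K : Type*} [NormedAddCommGroup K]
  [InnerProductSpace ℂ K] [CompleteSpace K] {ξ : (Fin n → ℝ) → K} (hΛ : MeasurableSet Λ)
  (hξ : MemLp ξ ⊤ (volume.restrict Λ)) {N : POVM (Fin n → ℝ) (Lp ℂ 2 (volume.restrict Λ))}
  {U : (Fin n → ℝ) → (Lp ℂ 2 (volume.restrict Λ) ≃ₗᵢ[ℂ] Lp ℂ 2 (volume.restrict Λ))}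

lemma IsCovariantPos.inner_closedBall (hN : IsCovariantPos n Λ U N)
    (φ : Lp ℂ 2 (volume.restrict Λ)) (x : Fin n → ℝ) (r : ℝ) :
    ⟪U (-x) φ, N.toFun (Metric.closedBall 0 r) (U (-x) φ)⟫ =
      ⟪φ, N.toFun (Metric.closedBall x r) φ⟫ := by
  have h_ball : (fun y => y + -x) '' Metric.closedBall x r = Metric.closedBall 0 r := by
    rw [image_add_right]
    ext y
    simp [dist_eq_norm]
  rw [← hN (-x) (Metric.closedBall x r) measurableSet_closedBall, h_ball]

variable {s : ℝ} (hs : 0 ≤ s)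
  (hNs : ∀ B, MeasurableSet B → N.toFun B ≤ (s : ℂ) • compression (dilation hΛ hξ) B 1)
  (hN : IsCovariantPos n Λ U N) (hU : IsModulationRep (volume.restrict Λ) U)
include hs hNs hN hU

lemma exists_isSupportedOn_tendsto_diagMeasure_closedBall {G : Ultrafilter ℝ}
    (hG : (G : Filter ℝ) ≤ 𝓝[>] 0) :
    ∃ Q : K →L[ℂ] K, IsSupportedOn Q (fieldSubspace (volume.restrict Λ) ξ) ∧
      ∀ (φ : integrableSubmodule (volume.restrict Λ)) x,
        Tendsto (fun r => (((volume.real (Metric.closedBall x r))⁻¹ *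
            (N.diagMeasure φ.1).real (Metric.closedBall x r) : ℝ) : ℂ)) G
          (𝓝 ⟪fieldTransform hξ φ x, Q (fieldTransform hξ φ x)⟫) := by
  obtain ⟨Q, hQ, hQ_lim⟩ := exists_isSupportedOn_tendsto_inner_closedBall hΛ hξ hs hNs hG
  refine ⟨Q, hQ, fun φ x => ?_⟩
  set Uφ : integrableSubmodule (volume.restrict Λ) :=
    ⟨U (-x) φ.1, hU.map_mem_integrableSubmodule (-x) φ⟩ with hUφ
  have h_zero : fieldTransform hξ Uφ 0 = fieldTransform hξ φ x := by
    rw [hUφ, fieldTransform_modulation hξ hU, zero_sub, neg_neg]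
  rw [← h_zero]
  refine (hQ_lim Uφ Uφ).congr fun r => ?_
  rw [hN.inner_closedBall, N.inner_toFun_self _ measurableSet_closedBall, ← Complex.ofReal_mul,
    measureReal_def, measureReal_def volume, Measure.addHaar_closedBall_center volume x]

lemma exists_isSupportedOn_toFun_eq_compression :
    ∃ Q : K →L[ℂ] K, IsSupportedOn Q (fieldSubspace (volume.restrict Λ) ξ) ∧
      ∀ B, MeasurableSet B → N.toFun B = compression (dilation hΛ hξ) B Q := by
  set G : Ultrafilter ℝ := Ultrafilter.of (𝓝[>] 0)
  have hG : (G : Filter ℝ) ≤ 𝓝[>] 0 := Ultrafilter.of_le _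
  obtain ⟨Q, hQ, hQ_lim⟩ :=
    exists_isSupportedOn_tendsto_diagMeasure_closedBall hΛ hξ hs hNs hN hU hG
  refine ⟨Q, hQ, fun B hB => ext_inner_map_of_dense dense_integrableSubmodule fun φ hφ => ?_⟩
  set ρ : (Fin n → ℝ) → ℂ := fun x =>
    ⟪fieldTransform hξ ⟨φ, hφ⟩ x, Q (fieldTransform hξ ⟨φ, hφ⟩ x)⟫ with hρ
  have hρ_cont : Continuous ρ :=
    (continuous_fieldTransform hξ _).inner (Q.continuous.comp (continuous_fieldTransform hξ _))
  have hρ_nonneg : ∀ x, 0 ≤ ρ x := fun x => ge_of_tendsto' (hQ_lim ⟨φ, hφ⟩ x) fun r =>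
    Complex.zero_le_real.2 (mul_nonneg (inv_nonneg.2 measureReal_nonneg) measureReal_nonneg)
  have hρ_re : ∀ x, 0 ≤ (ρ x).re := fun x => (Complex.nonneg_iff.1 (hρ_nonneg x)).1
  have h_density : N.diagMeasure φ = volume.withDensity fun x => ENNReal.ofReal (ρ x).re :=
    eq_withDensity_of_tendsto_closedBall
      (diagMeasure_absolutelyContinuous hΛ hξ hNs ⟨φ, hφ⟩) hG fun x =>
        (Complex.continuous_re.tendsto _).comp (hQ_lim ⟨φ, hφ⟩ x)
  have h_ofReal : ρ = fun x => ((ρ x).re : ℂ) := by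
    ext x
    exact Complex.eq_re_of_ofReal_le (hρ_nonneg x)
  rw [N.inner_toFun_self φ hB, inner_compression_dilation hΛ hξ B ⟨φ, hφ⟩ ⟨φ, hφ⟩, ← hρ, h_ofReal,
    integral_complex_ofReal, integral_eq_lintegral_of_nonneg_ae (.of_forall hρ_re)
      (Complex.continuous_re.comp hρ_cont).aestronglyMeasurable,
    ← withDensity_apply _ hB, ← h_density, Measure.real]

end Representation

lemma le_inv_smul_of_eq_smul_add_smul {H : Type*} [NormedAddCommGroup H] [InnerProductSpace ℂ H]
    {T T₁ T₂ : H →L[ℂ] H} (hT₂ : T₂.IsPositive) {t u : ℝ} (ht : 0 < t) (hu : 0 ≤ u)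
    (h : T = (t : ℂ) • T₁ + (u : ℂ) • T₂) : T₁ ≤ ((t⁻¹ : ℝ) : ℂ) • T := by
  have ht0 : (t : ℂ) ≠ 0 := Complex.ofReal_ne_zero.2 ht.ne'
  rw [ContinuousLinearMap.le_def, h, smul_add, Complex.ofReal_inv, inv_smul_smul₀ ht0,
    add_sub_cancel_left]
  exact (hT₂.smul_of_nonneg (Complex.zero_le_real.2 hu)).smul_of_nonneg
    (inv_nonneg.2 (Complex.zero_le_real.2 ht.le))

section Injectivity

variable {ι : Type*} [Fintype ι] {Λ : Set (ι → ℝ)} {K : Type*} [NormedAddCommGroup K]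
  [InnerProductSpace ℂ K] [CompleteSpace K] {ξ : (ι → ℝ) → K} (hΛ : MeasurableSet Λ)
  (hξ : MemLp ξ ⊤ (volume.restrict Λ))

lemma inner_self_eq_zero_of_compression_eq_zero {S : K →L[ℂ] K}
    (hS : ∀ B, MeasurableSet B → compression (dilation hΛ hξ) B S = 0) :
    ∀ v ∈ fieldSubspace (volume.restrict Λ) ξ, ⟪v, S v⟫ = 0 := by
  have h_range : ∀ φ, ⟪fieldTransform hξ φ 0, S (fieldTransform hξ φ 0)⟫ = 0 := fun φ => by
    have h_cont : Continuous fun x => ⟪fieldTransform hξ φ x, S (fieldTransform hξ φ x)⟫ :=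
      (continuous_fieldTransform hξ φ).inner (S.continuous.comp (continuous_fieldTransform hξ φ))
    refine tendsto_nhds_unique (tendsto_setAverage_closedBall (μ := volume) h_cont 0)
      (tendsto_const_nhds.congr fun r => ?_)
    rw [setAverage_eq, ← inner_compression_dilation hΛ, hS _ measurableSet_closedBall,
      _root_.zero_apply, inner_zero_right, smul_zero]
  intro v hv
  rw [← topologicalClosure_range_fieldTransform_zero hξ] at hv
  refine closure_minimal ?_
    (isClosed_eq (continuous_id.inner S.continuous) (continuous_const (y := (0 : ℂ)))) hv
  rintro _ ⟨φ, rfl⟩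
  exact h_range φ

end Injectivity

section Extremality

variable {n : ℕ} {Λ : Set (Fin n → ℝ)} {K : Type*} [NormedAddCommGroup K]
  [InnerProductSpace ℂ K] {ξ : (Fin n → ℝ) → K}
  {M N : POVM (Fin n → ℝ) (Lp ℂ 2 (volume.restrict Λ))}
  {U : (Fin n → ℝ) → (Lp ℂ 2 (volume.restrict Λ) ≃ₗᵢ[ℂ] Lp ℂ 2 (volume.restrict Λ))}

/-- `MatrixFormula` for a field `ξ` with values in an arbitrary Hilbert space. -/
def FieldMatrixFormula (Λ : Set (Fin n → ℝ)) (ξ : (Fin n → ℝ) → K)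
    (M : POVM (Fin n → ℝ) (Lp ℂ 2 (volume.restrict Λ))) : Prop :=
  ∀ φ ψ : (Fin n → ℝ) → ℂ,
    Integrable φ (volume.restrict Λ) → Integrable ψ (volume.restrict Λ) →
    ∀ (hφ : MemLp φ 2 (volume.restrict Λ)) (hψ : MemLp ψ 2 (volume.restrict Λ)),
    ∀ B : Set (Fin n → ℝ), MeasurableSet B →
      ⟪hφ.toLp φ, M.toFun B (hψ.toLp ψ)⟫
        = (((2 * Real.pi) ^ n : ℝ) : ℂ)⁻¹ *
          ∫ x in B, (∫ p₁, (∫ p₂,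
              Complex.exp (Complex.I * (∑ k, x k * (p₁ k - p₂ k))) *
                ⟪ξ p₁, ξ p₂⟫ * conj (φ p₁) * ψ p₂
              ∂(volume.restrict Λ)) ∂(volume.restrict Λ))

variable [CompleteSpace K] (hΛ : MeasurableSet Λ) (hξ : MemLp ξ ⊤ (volume.restrict Λ))

lemma FieldMatrixFormula.toFun_eq_compression (hM : FieldMatrixFormula Λ ξ M)
    {B : Set (Fin n → ℝ)} (hB : MeasurableSet B) :
    M.toFun B = compression (dilation hΛ hξ) B 1 := by
  refine ext_inner_map_of_dense dense_integrableSubmodule fun φ hφ => ?_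
  have h := hM φ φ hφ hφ (Lp.memLp φ) (Lp.memLp φ) B hB
  rw [Lp.toLp_coeFn] at h
  rw [h, inner_compression_dilation hΛ hξ B ⟨φ, hφ⟩ ⟨φ, hφ⟩, ← integral_const_mul]
  congr 1 with x
  have hφξ := integrable_smul_field hξ ⟨φ, hφ⟩
  simp only [one_apply_eq_self, fieldTransform, LinearMap.coe_mk, AddHom.coe_mk,
    inner_unitaryFourier hφξ hφξ, Fintype.card_fin, inner_smul_left, inner_smul_right]
  congr! 5
  ring

variable (hU : IsModulationRep (volume.restrict Λ) U)
  (hM : ∀ B, MeasurableSet B → M.toFun B = compression (dilation hΛ hξ) B 1)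
include hM

lemma ae_inner_self_eq_one : ∀ᵐ p ∂(volume.restrict Λ), ⟪ξ p, ξ p⟫ = 1 :=
  ae_inner_eq_one_of_compression_dilation_univ (Q := 1) hΛ hξ (by rw [← hM _ .univ, M.normalized])

include hU

lemma compression_eq_zero_of_isExtremeCovariantPos (hM_ext : IsExtremeCovariantPos n Λ U M)
    {S : K →L[ℂ] K} (hS : IsSelfAdjoint S) (hS1 : ‖S‖ ≤ 1)
    (hξS : ∀ᵐ p ∂(volume.restrict Λ), ⟪ξ p, S (ξ p)⟫ = 0) {B : Set (Fin n → ℝ)}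
    (hB : MeasurableSet B) : compression (dilation hΛ hξ) B S = 0 := by
  have h_one : ∀ R : K →L[ℂ] K, (∀ᵐ p ∂(volume.restrict Λ), ⟪ξ p, R (ξ p)⟫ = 0) →
      compression (dilation hΛ hξ) univ (1 + R) = 1 := fun R hR => by
    refine compression_dilation_univ_eq_one hΛ hξ ?_
    filter_upwards [ae_inner_self_eq_one hΛ hξ hM, hR] with p h₁ h₀
    rw [_root_.add_apply, inner_add_right, h₀, add_zero, one_apply_eq_self, h₁]
  have hξS_neg : ∀ᵐ p ∂(volume.restrict Λ), ⟪ξ p, (-S) (ξ p)⟫ = 0 := by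
    filter_upwards [hξS] with p hp
    rw [_root_.neg_apply, inner_neg_right, hp, neg_zero]
  have h_eq := (hM_ext
    (compressionPOVM (dilation hΛ hξ) (isPositive_one_add hS hS1) (h_one S hξS))
    (compressionPOVM (dilation hΛ hξ) (isPositive_one_add hS.neg (by rwa [norm_neg]))
      (h_one (-S) hξS_neg))
    (fun q C _ φ ψ => inner_compression_dilation_modulation hΛ hξ hU q C φ ψ)
    (fun q C _ φ ψ => inner_compression_dilation_modulation hΛ hξ hU q C φ ψ)
    2⁻¹ (by norm_num) (by norm_num) (fun C hC => ?_) B hB).1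
  · rw [hM B hB] at h_eq
    change compression (dilation hΛ hξ) B (1 + S) = _ at h_eq
    rwa [map_add, add_eq_left] at h_eq
  · rw [hM C hC]
    change _ = _ • compression (dilation hΛ hξ) C (1 + S) +
      _ • compression (dilation hΛ hξ) C (1 + -S)
    rw [map_add, map_add, map_neg]
    push_cast
    module

lemma eq_zero_of_isExtremeCovariantPos (hM_ext : IsExtremeCovariantPos n Λ U M)
    {A : K →L[ℂ] K} (hA : IsSupportedOn A (fieldSubspace (volume.restrict Λ) ξ))
    (hξA : ∀ᵐ p ∂(volume.restrict Λ), ⟪ξ p, A (ξ p)⟫ = 0) : A = 0 := by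
  have h_selfAdjoint : ∀ S : K →L[ℂ] K, IsSelfAdjoint S →
      (∀ᵐ p ∂(volume.restrict Λ), ⟪ξ p, S (ξ p)⟫ = 0) →
      ∀ v ∈ fieldSubspace (volume.restrict Λ) ξ, ⟪v, S v⟫ = 0 := fun S hS hξS v hv => by
    set c : ℝ := (‖S‖ + 1)⁻¹ with hc
    have hc0 : c ≠ 0 := by positivity
    have hcS : ‖c • S‖ ≤ 1 := by
      rw [norm_smul, Real.norm_of_nonneg (by positivity), hc, inv_mul_le_one₀ (by positivity)]
      exact le_add_of_nonneg_right zero_le_one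
    have hξcS : ∀ᵐ p ∂(volume.restrict Λ), ⟪ξ p, (c • S) (ξ p)⟫ = 0 := by
      filter_upwards [hξS] with p hp
      rw [_root_.smul_apply, inner_smul_right_eq_smul, hp, smul_zero]
    have h_zero := inner_self_eq_zero_of_compression_eq_zero hΛ hξ (fun _ hB =>
      compression_eq_zero_of_isExtremeCovariantPos hΛ hξ hU hM hM_ext
        ((IsSelfAdjoint.all c).smul hS) hcS hξcS hB) v hv
    rwa [_root_.smul_apply, inner_smul_right_eq_smul, smul_eq_zero_iff_right hc0] at h_zero
  refine hA.eq_zero_of_inner_self_eq_zero fun v hv => Complex.ext ?_ ?_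
  · have h := h_selfAdjoint (ℜ A) (ℜ A).2 (hξA.mono fun p hp => by
      rw [inner_realPart_self, hp, Complex.zero_re, Complex.ofReal_zero]) v hv
    rwa [inner_realPart_self, Complex.ofReal_eq_zero] at h
  · have h := h_selfAdjoint (ℑ A) (ℑ A).2 (hξA.mono fun p hp => by
      rw [inner_imaginaryPart_self, hp, Complex.zero_im, Complex.ofReal_zero]) v hv
    rwa [inner_imaginaryPart_self, Complex.ofReal_eq_zero] at h

lemma toFun_eq_of_le_smul (hN : IsCovariantPos n Λ U N) {s : ℝ} (hs : 0 ≤ s)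
    (hNM : ∀ B, MeasurableSet B → N.toFun B ≤ (s : ℂ) • M.toFun B)
    (h : ∀ A : K →L[ℂ] K, IsSupportedOn A (fieldSubspace (volume.restrict Λ) ξ) →
      (∀ᵐ p ∂(volume.restrict Λ), ⟪ξ p, A (ξ p)⟫ = 0) → A = 0)
    {B : Set (Fin n → ℝ)} (hB : MeasurableSet B) : N.toFun B = M.toFun B := by
  obtain ⟨Q, hQ, hNQ⟩ := exists_isSupportedOn_toFun_eq_compression hΛ hξ hs
    (fun B hB => (hNM B hB).trans_eq (by rw [hM B hB])) hN hU
  have hξQ := ae_inner_eq_one_of_compression_dilation_univ hΛ hξ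
    (by rw [← hNQ _ .univ, N.normalized])
  have hQP : Q - (fieldSubspace (volume.restrict Λ) ξ).starProjection = 0 := by
    refine h _ (hQ.sub (isSupportedOn_starProjection _)) ?_
    filter_upwards [hξQ, ae_inner_self_eq_one hΛ hξ hM, ae_mem_fieldSubspace hξ] with p hp h₁ hpS
    rw [_root_.sub_apply, Submodule.starProjection_eq_self_iff.2 hpS, inner_sub_right, hp, h₁,
      sub_self]
  rw [hNQ B hB, hM B hB, sub_eq_zero.1 hQP, compression_dilation_starProjection]

end Extremality

lemma stronglyMeasurable_of_measurable_inner {X ι K : Type*} [MeasurableSpace X] [Countable ι]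
    [NormedAddCommGroup K] [InnerProductSpace ℂ K] (b : HilbertBasis ι ℂ K) {f : X → K}
    (hf : ∀ e, Measurable fun x => ⟪e, f x⟫) : StronglyMeasurable f := by
  refine stronglyMeasurable_of_tendsto atTop
    (f := fun s x => ∑ i ∈ s, b.repr (f x) i • b i) (fun s => ?_)
    (tendsto_pi_nhds.2 fun x => b.hasSum_repr (f x))
  simp only [b.repr_apply_apply]
  exact Finset.stronglyMeasurable_fun_sum _ fun i _ => (hf (b i)).stronglyMeasurable.smul_const _

theorem stmt3_general (n : ℕ) (Λ : Set (Fin n → ℝ)) (hΛ : MeasurableSet Λ)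
    (U : (Fin n → ℝ) →
      (Lp ℂ 2 (volume.restrict Λ) ≃ₗᵢ[ℂ] Lp ℂ 2 (volume.restrict Λ)))
    (hU : IsModulationRep (volume.restrict Λ) U) {K : Type*} [NormedAddCommGroup K]
    [InnerProductSpace ℂ K] [CompleteSpace K] (ξ : (Fin n → ℝ) → K)
    (hξ : MemLp ξ ⊤ (volume.restrict Λ))
    (M : POVM (Fin n → ℝ) (Lp ℂ 2 (volume.restrict Λ))) (hM : FieldMatrixFormula Λ ξ M) :
    IsExtremeCovariantPos n Λ U M ↔
      ∀ A : K →L[ℂ] K, IsSupportedOn A (fieldSubspace (volume.restrict Λ) ξ) →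
        (∀ᵐ p ∂(volume.restrict Λ), ⟪ξ p, A (ξ p)⟫ = 0) → A = 0 := by
  have hMW : ∀ B, MeasurableSet B → M.toFun B = compression (dilation hΛ hξ) B 1 :=
    fun B hB => hM.toFun_eq_compression hΛ hξ hB
  refine ⟨fun hM_ext A hA hξA => eq_zero_of_isExtremeCovariantPos hΛ hξ hU hMW hM_ext hA hξA,
    fun h M₁ M₂ hM₁ hM₂ t ht ht1 h_comb B hB => ?_⟩
  have ht' : 0 < 1 - t := sub_pos.2 ht1
  have hM₁_le : ∀ C, MeasurableSet C → M₁.toFun C ≤ ((t⁻¹ : ℝ) : ℂ) • M.toFun C := fun C hC =>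
    le_inv_smul_of_eq_smul_add_smul (M₂.isPositive C hC) ht ht'.le (h_comb C hC)
  have hM₂_le : ∀ C, MeasurableSet C → M₂.toFun C ≤ (((1 - t)⁻¹ : ℝ) : ℂ) • M.toFun C :=
    fun C hC => le_inv_smul_of_eq_smul_add_smul (M₁.isPositive C hC) ht' ht.le
      ((h_comb C hC).trans (add_comm _ _))
  exact ⟨toFun_eq_of_le_smul hΛ hξ hU hMW hM₁ (inv_nonneg.2 ht.le) hM₁_le h hB,
    toFun_eq_of_le_smul hΛ hξ hU hMW hM₂ (inv_nonneg.2 ht'.le) hM₂_le h hB⟩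

theorem stmt3 (n : ℕ) (hn : 1 ≤ n) (Λ : Set (Fin n → ℝ)) (hΛmeas : MeasurableSet Λ)
    (hΛpos : 0 < volume Λ)
    (U : (Fin n → ℝ) →
      (Lp ℂ 2 (volume.restrict Λ) ≃ₗᵢ[ℂ] Lp ℂ 2 (volume.restrict Λ)))
    (hU : ∀ q : Fin n → ℝ, ∀ φ : Lp ℂ 2 (volume.restrict Λ),
      (U q φ : (Fin n → ℝ) → ℂ) =ᵐ[volume.restrict Λ]
        fun p => Complex.exp (Complex.I * (∑ k, q k * p k)) * φ p)
    (ξ : (Fin n → ℝ) → ell2)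
    (hξmeas : ∀ e : ell2, Measurable fun p => ⟪e, ξ p⟫)
    (hξnorm : ∀ᵐ p ∂(volume.restrict Λ), ‖ξ p‖ = 1)
    (M : POVM (Fin n → ℝ) (Lp ℂ 2 (volume.restrict Λ)))
    (hMcov : IsCovariantPos n Λ U M)
    (hMform : MatrixFormula n Λ ξ M) :
    IsExtremeCovariantPos n Λ U M ↔
      -- the only bounded operator `A` on `𝐇` (identified with the operators on `ℓ²(ℕ)`
      -- mapping `𝐇` into itself and vanishing on `𝐇ᗮ`) with `⟨ξ(p), A ξ(p)⟩ = 0`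
      -- for a.e. `p ∈ Λ` is `A = 0`
      ∀ A : ell2 →L[ℂ] ell2,
        (∀ v : ell2, A v ∈ genSubspace n Λ ξ) →
        (∀ v ∈ (genSubspace n Λ ξ)ᗮ, A v = 0) →
        (∀ᵐ p ∂(volume.restrict Λ), ⟪ξ p, A (ξ p)⟫ = 0) →
        A = 0 := by
  have hξ : StronglyMeasurable ξ :=
    stronglyMeasurable_of_measurable_inner (.ofRepr (.refl ℂ ell2)) hξmeas
  exact (stmt3_general n Λ hΛmeas U hU ξ (memLp_top_of_bound hξ.aestronglyMeasurable 1
    (hξnorm.mono fun p hp => hp.le)) M hMform).trans (forall_congr' fun A => and_imp)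
end

section
/- Let n ≥ 1 and let M be a POVM on (ℝⁿ, ℬ(ℝⁿ)) acting on L²(ℝⁿ) that is covariant under position translations, i.e. U(q) M(B) U(q)* = M(B + q) for all q ∈ ℝⁿ and Borel B ⊆ ℝⁿ, and invariant under momentum boosts, i.e. V(p) M(B) V(p)* = M(B) for all p ∈ ℝⁿ and Borel B ⊆ ℝⁿ. Then there exists a Borel probability measure ρ on ℝⁿ such that for all φ, ψ ∈ L²(ℝⁿ) and all Borel B ⊆ ℝⁿ: ⟨φ, M(B)ψ⟩ = ∫_B ∫_{ℝⁿ} conj(φ(x − q)) ψ(x − q) dρ(q) dx; that is, M = ρ ∗ M_κ is the convolution of a probability measure with the canonical position observable. -/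
open MeasureTheory Set
open scoped ComplexConjugate

local notation "⟪" x ", " y "⟫" => @inner ℂ _ _ x y

/-- `L²(ℝⁿ)`. -/
noncomputable abbrev L2Rn (n : ℕ) : Type := Lp ℂ 2 (volume : Measure (Fin n → ℝ))

/-- Covariance under position translations: `U(q) M(B) U(q)* = M(B + q)`. -/
def TransCovariant (n : ℕ) (U : (Fin n → ℝ) → (L2Rn n ≃ₗᵢ[ℂ] L2Rn n))
    (M : POVM (Fin n → ℝ) (L2Rn n)) : Prop :=
  ∀ q : Fin n → ℝ, ∀ B : Set (Fin n → ℝ), MeasurableSet B →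
    ∀ φ ψ : L2Rn n,
      ⟪(U q φ : L2Rn n), M.toFun ((fun x => x + q) '' B) (U q ψ)⟫ = ⟪φ, M.toFun B ψ⟫

/-- Invariance under momentum boosts: `V(p) M(B) V(p)* = M(B)`. -/
def BoostInvariant (n : ℕ) (V : (Fin n → ℝ) → (L2Rn n ≃ₗᵢ[ℂ] L2Rn n))
    (M : POVM (Fin n → ℝ) (L2Rn n)) : Prop :=
  ∀ p : Fin n → ℝ, ∀ B : Set (Fin n → ℝ), MeasurableSet B →
    ∀ φ ψ : L2Rn n,
      ⟪(V p φ : L2Rn n), M.toFun B (V p ψ)⟫ = ⟪φ, M.toFun B ψ⟫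

/- Boost invariance and uniqueness of Fourier transforms make every `M(B)` the operator of
multiplication by a function `m_B ≥ 0`. Let `M_φ` be the measure `B ↦ ⟪φ, M(B)φ⟫`. By translation
covariance `(M_φ ∗ |ψ|²)(B) = ∫ m_B d(|ψ|² ∗ |φ|²)`, and this is symmetric in `φ` and `ψ`, so
`M_φ ∗ |ψ|² = M_ψ ∗ |φ|²`. Let `|ψ|²` run through an approximate identity: the Fourier transforms
of the measures `M_ψ` converge to a function which is continuous at `0`, by Lévy's theorem the
transform of a probability measure `ρ`, and `M_φ = ρ ∗ |φ|²` for all `φ`. Testing this on indicator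
functions `φ` gives `m_B(y) = ρ(B - y)`. -/

open Filter Topology ENNReal NNReal Complex

section CharacteristicFunctions

variable {E : Type*} [NormedAddCommGroup E] [MeasurableSpace E]

theorem charFunDual_withDensity_ofReal [NormedSpace ℝ E] {μ : Measure E} {r : E → ℝ}
    (hr : AEMeasurable r μ) (hr0 : 0 ≤ r) (L : StrongDual ℝ E) :
    charFunDual (μ.withDensity fun x => ENNReal.ofReal (r x)) L
      = ∫ x, cexp (L x * I) * r x ∂μ := by
  rw [charFunDual_apply, integral_withDensity_eq_integral_toReal_smul₀ hr.ennreal_ofReal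
    (ae_of_all _ fun x => ofReal_lt_top)]
  simp only [toReal_ofReal (hr0 _), Complex.real_smul, mul_comm]

variable [BorelSpace E]

theorem exists_charFun_eq_of_tendsto [InnerProductSpace ℝ E] [FiniteDimensional ℝ E]
    {μ : ℕ → ProbabilityMeasure E} {f : E → ℂ} (hf : ContinuousAt f 0)
    (hμ : ∀ t, Tendsto (fun i => charFun (μ i : Measure E) t) atTop (𝓝 (f t))) :
    ∃ ρ : ProbabilityMeasure E, charFun (ρ : Measure E) = f := by
  have htight : IsTightMeasureSet {ν : Measure E | ∃ κ ∈ range μ, (κ : Measure E) = ν} := by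
    have hset : {ν : Measure E | ∃ κ ∈ range μ, (κ : Measure E) = ν}
        = range fun i => (μ i : Measure E) := by
      ext; simp
    exact hset ▸ isTightMeasureSet_of_tendsto_charFun hf hμ
  obtain ⟨ρ, -, k, hk, hlim⟩ := (isCompact_closure_of_isTightMeasureSet htight).isSeqCompact
    fun i => subset_closure (mem_range_self i)
  exact ⟨ρ, funext fun t => tendsto_nhds_unique
    (ProbabilityMeasure.tendsto_iff_tendsto_charFun.1 hlim t) ((hμ t).comp hk.tendsto_atTop)⟩

variable [NormedSpace ℝ E]

theorem exists_charFunDual_eq_of_tendsto [FiniteDimensional ℝ E]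
    {μ : ℕ → Measure E} [∀ i, IsProbabilityMeasure (μ i)] {f : StrongDual ℝ E → ℂ}
    (hf : ContinuousAt f 0) (hμ : ∀ L, Tendsto (fun i => charFunDual (μ i) L) atTop (𝓝 (f L))) :
    ∃ ρ : Measure E, IsProbabilityMeasure ρ ∧ charFunDual ρ = f := by
  let e : E ≃L[ℝ] EuclideanSpace ℝ (Fin (Module.finrank ℝ E)) := toEuclidean
  let T := fun t => InnerProductSpace.toDualMap ℝ _ t ∘L e.toContinuousLinearMap
  have hT : Continuous T := by fun_prop
  have hmap (ν : Measure E) (t) : charFun (ν.map e) t = charFunDual ν (T t) :=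
    (charFun_eq_charFunDual_toDualMap t).trans (charFunDual_map e.toContinuousLinearMap _)
  obtain ⟨ρ, hρ⟩ := exists_charFun_eq_of_tendsto
    (μ := fun i => ⟨(μ i).map e, Measure.isProbabilityMeasure_map e.continuous.aemeasurable⟩)
    (f := f ∘ T) (ContinuousAt.comp (by simpa [T] using hf) hT.continuousAt)
    fun t => by simpa only [ProbabilityMeasure.coe_mk, hmap, Function.comp_apply] using hμ (T t)
  refine ⟨(ρ : Measure _).map e.symm,
    Measure.isProbabilityMeasure_map e.symm.continuous.aemeasurable, funext fun L => ?_⟩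
  calc charFunDual ((ρ : Measure _).map e.symm) L
      = charFunDual (ρ : Measure _) (L ∘L e.symm.toContinuousLinearMap) :=
        charFunDual_map e.symm.toContinuousLinearMap L
    _ = f (T ((InnerProductSpace.toDual ℝ _).symm (L ∘L e.symm.toContinuousLinearMap))) := by
        rw [← charFun_toDual_symm_eq_charFunDual, hρ, Function.comp_apply]
    _ = f L := by
        congr 1
        ext x
        simp [T]

theorem continuous_charFunDual (μ : Measure E) [IsFiniteMeasure μ] :
    Continuous (charFunDual μ) :=
  continuous_of_dominated (F := fun (L : StrongDual ℝ E) x => cexp (L x * I)) (bound := fun _ => 1)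
    (fun L => (by fun_prop : Measurable fun x => cexp (L x * I)).aestronglyMeasurable)
    (fun L => ae_of_all _ fun x => (norm_exp_ofReal_mul_I (L x)).le) (integrable_const 1)
    (ae_of_all _ fun x => by fun_prop)

/- If the transforms of `ν i` tend to `1`, those of `μ i` tend to the quotient of the transforms
of `μ j` and `ν j`, for any `j` for which the latter does not vanish. -/
theorem exists_forall_eq_conv_of_conv_comm [FiniteDimensional ℝ E]
    {μ ν : ℕ → Measure E} [∀ i, IsProbabilityMeasure (μ i)] [∀ i, IsProbabilityMeasure (ν i)]
    (hcomm : ∀ i j, μ i ∗ ν j = μ j ∗ ν i)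
    (hν : ∀ L, Tendsto (fun i => charFunDual (ν i) L) atTop (𝓝 1)) :
    ∃ ρ : Measure E, IsProbabilityMeasure ρ ∧
      ∀ (μ' ν' : Measure E) [IsFiniteMeasure μ'] [IsFiniteMeasure ν'],
        (∀ i, μ' ∗ ν i = μ i ∗ ν') → μ' = ρ ∗ ν' := by
  have hlim (j L) (hj : charFunDual (ν j) L ≠ 0) : Tendsto (fun i => charFunDual (μ i) L) atTop
      (𝓝 (charFunDual (μ j) L / charFunDual (ν j) L)) := by
    have hquot (i) : charFunDual (μ j) L / charFunDual (ν j) L * charFunDual (ν i) L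
        = charFunDual (μ i) L := by
      rw [div_mul_eq_mul_div, div_eq_iff hj, ← charFunDual_conv, ← charFunDual_conv, hcomm]
    simpa only [hquot, mul_one] using
      (hν L).const_mul (charFunDual (μ j) L / charFunDual (ν j) L)
  have hexists (L) : ∃ z, Tendsto (fun i => charFunDual (μ i) L) atTop (𝓝 z) :=
    let ⟨j, hj⟩ := ((hν L).eventually_ne one_ne_zero).exists
    ⟨_, hlim j L hj⟩
  choose f hf using hexists
  have hcont : ContinuousAt f 0 := by
    have hne : charFunDual (ν 0) 0 ≠ 0 := by simp [charFunDual_apply]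
    refine ((continuous_charFunDual (μ 0)).continuousAt.div
      (continuous_charFunDual (ν 0)).continuousAt hne).congr ?_
    filter_upwards [(continuous_charFunDual (ν 0)).continuousAt.eventually_ne hne] with L hL
    exact tendsto_nhds_unique (hlim 0 L hL) (hf L)
  obtain ⟨ρ, hρ, hρf⟩ := exists_charFunDual_eq_of_tendsto hcont hf
  refine ⟨ρ, hρ, fun μ' ν' _ _ h => Measure.ext_of_charFunDual (funext fun L => ?_)⟩
  have hμ' : Tendsto (fun i => charFunDual (μ i) L * charFunDual ν' L) atTop
      (𝓝 (charFunDual μ' L)) := by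
    simpa only [← charFunDual_conv, h, mul_one] using (hν L).const_mul (charFunDual μ' L)
  rw [charFunDual_conv, hρf]
  exact tendsto_nhds_unique hμ' ((hf L).mul_const _)

theorem exists_absolutelyContinuous_tendsto_charFunDual_one [FiniteDimensional ℝ E]
    (μ : Measure E) [μ.IsAddHaarMeasure] :
    ∃ ν : ℕ → Measure E, (∀ i, IsProbabilityMeasure (ν i)) ∧ (∀ i, ν i ≪ μ) ∧
      ∀ L, Tendsto (fun i => charFunDual (ν i) L) atTop (𝓝 1) := by
  let c : ℕ → ℝ := fun i => 1 / (i + 1)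
  have hc (i) : c i ≠ 0 := by positivity
  refine ⟨fun i => μ.toFinite.map (c i • ·),
    fun i => Measure.isProbabilityMeasure_map (measurable_const_smul _).aemeasurable, fun i => ?_,
    fun L => ?_⟩
  · exact ((toFinite_absolutelyContinuous μ).map (measurable_const_smul _)).trans
      (Measure.quasiMeasurePreserving_smul μ (hc i)).absolutelyContinuous
  · have hscale (i) : charFunDual (μ.toFinite.map (c i • ·)) L
        = charFunDual μ.toFinite (c i • L) := by
      rw [charFunDual_apply, charFunDual_apply,
        integral_map (measurable_const_smul _).aemeasurable
          (by fun_prop : Measurable fun x => cexp (L x * I)).aestronglyMeasurable]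
      simp
    have hzero : charFunDual μ.toFinite 0 = 1 := by simp [charFunDual_apply]
    have hsmul : Tendsto (fun i => c i • L) atTop (𝓝 0) := by
      simpa only [zero_smul] using
        (tendsto_one_div_add_atTop_nhds_zero_nat (𝕜 := ℝ)).smul_const L
    simpa only [hscale, hzero, Function.comp_def] using
      (continuous_charFunDual μ.toFinite).continuousAt.tendsto.comp hsmul

theorem integrable_cexp_mul {μ : Measure E} {f : E → ℂ} (hf : Integrable f μ)
    (L : StrongDual ℝ E) : Integrable (fun x => cexp (L x * I) * f x) μ :=
  hf.bdd_mul (c := 1) (by fun_prop : Measurable fun x => cexp (L x * I)).aestronglyMeasurable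
    (ae_of_all _ fun x => (norm_exp_ofReal_mul_I (L x)).le)

variable [CompleteSpace E] [SecondCountableTopology E] {μ : Measure E}

/- Adding `|r|` turns the claim into uniqueness of the transform of a finite measure. -/
theorem ae_eq_zero_of_forall_integral_cexp_mul_ofReal_eq_zero {r : E → ℝ} (hr : Integrable r μ)
    (h : ∀ L : StrongDual ℝ E, ∫ x, cexp (L x * I) * r x ∂μ = 0) : r =ᵐ[μ] 0 := by
  have hsum : Integrable (fun x => |r x| + r x) μ := hr.abs.add hr
  have hsum0 (x) : 0 ≤ |r x| + r x := by linarith [neg_abs_le (r x)]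
  have := isFiniteMeasure_withDensity_ofReal hr.abs.2
  have := isFiniteMeasure_withDensity_ofReal hsum.2
  have heq : μ.withDensity (fun x => ENNReal.ofReal (|r x| + r x))
      = μ.withDensity fun x => ENNReal.ofReal |r x| := by
    refine Measure.ext_of_charFunDual (funext fun L => ?_)
    rw [charFunDual_withDensity_ofReal hsum.aemeasurable hsum0,
      charFunDual_withDensity_ofReal hr.abs.aemeasurable fun x => abs_nonneg (r x)]
    simp only [Complex.ofReal_add, mul_add]
    have hint {s : E → ℝ} (hs : Integrable s μ) :
        Integrable (fun x => cexp (L x * I) * s x) μ := integrable_cexp_mul hs.ofReal L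
    rw [integral_add (hint hr.abs) (hint hr), h, add_zero]
  rw [withDensity_eq_iff hsum.aemeasurable.ennreal_ofReal hr.abs.aemeasurable.ennreal_ofReal
    hsum.lintegral_lt_top.ne] at heq
  filter_upwards [heq] with x hx
  simpa using (ofReal_eq_ofReal_iff (hsum0 x) (abs_nonneg _)).1 hx

theorem ae_eq_zero_of_forall_integral_cexp_mul_eq_zero {f : E → ℂ} (hf : Integrable f μ)
    (h : ∀ L : StrongDual ℝ E, ∫ x, cexp (L x * I) * f x ∂μ = 0) : f =ᵐ[μ] 0 := by
  have hre {g : E → ℂ} (hg : Integrable g μ)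
      (h : ∀ L : StrongDual ℝ E, ∫ x, cexp (L x * I) * g x ∂μ = 0) :
      (fun x => (g x).re) =ᵐ[μ] 0 := by
    refine ae_eq_zero_of_forall_integral_cexp_mul_ofReal_eq_zero hg.re fun L => ?_
    have hsplit (x) : cexp (L x * I) * (g x).re
        = (cexp (L x * I) * g x + conj (cexp ((-L) x * I) * g x)) / 2 := by
      rw [re_eq_add_conj, map_mul, ← exp_conj]
      simp [mul_add, mul_div_assoc, add_div]
    have hconj : Integrable (fun x => conj (cexp ((-L) x * I) * g x)) μ :=
      conjCLE.integrable_comp_iff.2 (integrable_cexp_mul hg (-L))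
    simp only [hsplit]
    rw [integral_div, integral_add (integrable_cexp_mul hg L) hconj, integral_conj, h, h]
    simp
  filter_upwards [hre hf h, hre (hf.const_mul I) fun L => by
    simp only [mul_left_comm _ I, integral_const_mul, h, mul_zero]] with x hx hx'
  exact Complex.ext hx (by simpa using hx')

end CharacteristicFunctions

section PositionMeasure

variable {α : Type*} [MeasurableSpace α] {μ : Measure α}

/-- The (unnormalized) distribution `|φ|² dμ` of the canonical position observable in the pure
state `φ`. -/
noncomputable def positionMeasure (φ : Lp ℂ 2 μ) : Measure α :=
  μ.withDensity fun x => ‖φ x‖ₑ ^ 2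

theorem measurable_enorm_sq (φ : Lp ℂ 2 μ) : Measurable fun x => ‖φ x‖ₑ ^ 2 :=
  (Lp.stronglyMeasurable φ).measurable.enorm.pow_const 2

theorem eLpNorm_two_sq (f : α → ℂ) : eLpNorm f 2 μ ^ 2 = ∫⁻ x, ‖f x‖ₑ ^ 2 ∂μ := by
  simpa using eLpNorm_nnreal_pow_eq_lintegral (f := f) (μ := μ) (p := 2) two_ne_zero

theorem positionMeasure_univ (φ : Lp ℂ 2 μ) : positionMeasure φ univ = ‖φ‖ₑ ^ 2 := by
  rw [positionMeasure, withDensity_apply _ .univ, Measure.restrict_univ, Lp.enorm_def,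
    eLpNorm_two_sq]

instance (φ : Lp ℂ 2 μ) : IsFiniteMeasure (positionMeasure φ) :=
  ⟨by simp [positionMeasure_univ]⟩

theorem lintegral_positionMeasure (φ : Lp ℂ 2 μ) (f : α → ℝ≥0∞) :
    ∫⁻ x, f x ∂positionMeasure φ = ∫⁻ x, ‖φ x‖ₑ ^ 2 * f x ∂μ :=
  lintegral_withDensity_eq_lintegral_mul_non_measurable _ (measurable_enorm_sq φ)
    (ae_of_all _ fun x => by simp) f

theorem exists_positionMeasure_eq [SigmaFinite μ] {ν : Measure α} [IsFiniteMeasure ν]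
    (hν : ν ≪ μ) : ∃ φ : Lp ℂ 2 μ, positionMeasure φ = ν := by
  let f : α → ℂ := fun x => (√(ν.rnDeriv μ x).toReal : ℝ)
  have hf : Measurable f :=
    Complex.measurable_ofReal.comp (ν.measurable_rnDeriv μ).ennreal_toReal.sqrt
  have hsq : (fun x => ‖f x‖ₑ ^ 2) =ᵐ[μ] ν.rnDeriv μ := by
    filter_upwards [ν.rnDeriv_lt_top μ] with x hx
    rw [← ofReal_norm, ← ofReal_pow (norm_nonneg _), norm_real, Real.norm_eq_abs, sq_abs,
      Real.sq_sqrt toReal_nonneg, ofReal_toReal hx.ne]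
  have hLp : MemLp f 2 μ := by
    refine ⟨hf.aestronglyMeasurable, ?_⟩
    have hlt : eLpNorm f 2 μ ^ 2 < ∞ := by
      rw [eLpNorm_two_sq, lintegral_congr_ae hsq]
      exact ν.lintegral_rnDeriv_lt_top μ
    simpa using hlt
  refine ⟨hLp.toLp f, ?_⟩
  rw [← ν.withDensity_rnDeriv_eq μ hν]
  refine withDensity_congr_ae (EventuallyEq.trans ?_ hsq)
  filter_upwards [hLp.coeFn_toLp] with x hx
  rw [hx]

theorem exists_ae_ne_zero (μ : Measure α) [SigmaFinite μ] :
    ∃ g : Lp ℂ 2 μ, ∀ᵐ x ∂μ, g x ≠ 0 := by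
  obtain ⟨g, hg⟩ := exists_positionMeasure_eq (toFinite_absolutelyContinuous μ)
  refine ⟨g, absolutelyContinuous_toFinite μ ?_⟩
  rw [← hg, positionMeasure, withDensity_apply_eq_zero (measurable_enorm_sq g)]
  convert measure_empty (μ := μ) using 2
  ext x
  simp

theorem positionMeasure_indicatorConstLp {A : Set α} (hA : MeasurableSet A) (hμA : μ A ≠ ∞) :
    positionMeasure (indicatorConstLp 2 hA hμA (1 : ℂ)) = μ.restrict A := by
  rw [← withDensity_indicator_one hA]
  refine withDensity_congr_ae ?_
  filter_upwards [indicatorConstLp_coeFn (hs := hA) (hμs := hμA) (c := (1 : ℂ)) (p := 2)] with x hx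
  by_cases hxA : x ∈ A <;> simp [hx, hxA]

theorem positionMeasure_of_ae_eq_sub [AddGroup α] [MeasurableAdd α] [μ.IsAddRightInvariant]
    {φ φ' : Lp ℂ 2 μ} {q : α} (h : φ' =ᵐ[μ] fun x => φ (x - q)) :
    positionMeasure φ' = (positionMeasure φ).map (· + q) := by
  have hq := measurePreserving_add_right μ q
  ext B hB
  rw [Measure.map_apply hq.measurable hB, positionMeasure, positionMeasure,
    withDensity_apply _ hB, withDensity_apply _ (hq.measurable hB),
    ← hq.setLIntegral_comp_preimage hB (measurable_enorm_sq φ')]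
  refine lintegral_congr_ae (ae_restrict_of_ae ?_)
  filter_upwards [hq.quasiMeasurePreserving.ae h] with x hx
  rw [hx, add_sub_cancel_right]

/-- `T` is the operator of multiplication by the measurable function `m ≥ 0`. The values of `m` are
in `ℝ≥0`, so that `⟪φ, T φ⟫` is a Lebesgue integral of `m`. -/
def IsMulOperator (T : Lp ℂ 2 μ →L[ℂ] Lp ℂ 2 μ) (m : α → ℝ≥0) : Prop :=
  Measurable m ∧ ∀ ψ, T ψ =ᵐ[μ] fun x => m x • ψ x

variable {T : Lp ℂ 2 μ →L[ℂ] Lp ℂ 2 μ}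

theorem IsMulOperator.ofReal_re_inner {m : α → ℝ≥0} (hm : IsMulOperator T m) (φ : Lp ℂ 2 μ) :
    ENNReal.ofReal ⟪φ, T φ⟫.re = ∫⁻ x, m x ∂positionMeasure φ := by
  have hre : (fun x => RCLike.re ⟪φ x, T φ x⟫) =ᵐ[μ] fun x => ‖φ x‖ ^ 2 * m x := by
    filter_upwards [hm.2 φ] with x hx
    rw [hx, inner_smul_right_eq_smul, inner_self_eq_norm_sq_to_K]
    simp [mul_comm, ← Complex.ofReal_pow, NNReal.smul_def]
  have hint : Integrable (fun x => ⟪φ x, T φ x⟫) μ := L2.integrable_inner φ (T φ)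
  have hinner : ⟪φ, T φ⟫.re = ∫ x, RCLike.re ⟪φ x, T φ x⟫ ∂μ := by
    rw [L2.inner_def]
    exact (integral_re hint).symm
  have hnonneg : 0 ≤ᵐ[μ] fun x => RCLike.re ⟪φ x, T φ x⟫ :=
    hre.mono fun x hx => hx ▸ by positivity
  rw [lintegral_positionMeasure, hinner, ofReal_integral_eq_lintegral_ofReal hint.re hnonneg]
  refine lintegral_congr_ae ?_
  filter_upwards [hre] with x hx
  rw [hx, ENNReal.ofReal_mul (by positivity), ofReal_pow (norm_nonneg _), ofReal_norm,
    ofReal_coe_nnreal]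

theorem ae_nonneg_re_of_isPositive [SigmaFinite μ] (hT : T.IsPositive) {w : α → ℂ}
    (hw : ∀ ψ, T ψ =ᵐ[μ] fun x => w x * ψ x) : 0 ≤ᵐ[μ] fun x => (w x).re := by
  have hind {A : Set α} (hA : MeasurableSet A) (hμA : μ A < ∞) :
      w =ᵐ[μ.restrict A] T (indicatorConstLp 2 hA hμA.ne 1) := by
    filter_upwards [ae_restrict_of_ae (hw (indicatorConstLp 2 hA hμA.ne 1)),
      ae_restrict_of_ae
        (indicatorConstLp_coeFn (hs := hA) (hμs := hμA.ne) (c := (1 : ℂ)) (p := 2)),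
      ae_restrict_mem hA] with x hx hx1 hxA
    rw [hx, hx1, indicator_of_mem hxA, mul_one]
  have hint {A : Set α} (hA : MeasurableSet A) (hμA : μ A < ∞) : IntegrableOn w A μ :=
    (integrableOn_Lp_of_measure_ne_top _ Fact.out hμA.ne).congr (hind hA hμA).symm
  refine ae_nonneg_of_forall_setIntegral_nonneg_of_sigmaFinite
    (fun A hA hμA => (hint hA hμA).re) fun A hA hμA => ?_
  calc (0 : ℝ)
      ≤ ⟪indicatorConstLp 2 hA hμA.ne (1 : ℂ), T (indicatorConstLp 2 hA hμA.ne 1)⟫.re :=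
        (Complex.nonneg_iff.1 (hT.inner_nonneg_right _)).1
    _ = (∫ x in A, w x ∂μ).re := by
        rw [L2.inner_indicatorConstLp_one, integral_congr_ae (hind hA hμA)]
    _ = ∫ x in A, (w x).re ∂μ := (integral_re (hint hA hμA)).symm

theorem exists_isMulOperator_of_inner_comm [SigmaFinite μ] (hT : T.IsPositive)
    (hcomm : ∀ φ ψ : Lp ℂ 2 μ, ∀ᵐ x ∂μ, ⟪T φ x, ψ x⟫ = ⟪φ x, T ψ x⟫) :
    ∃ m, IsMulOperator T m := by
  obtain ⟨g, hg⟩ := exists_ae_ne_zero μ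
  let w : α → ℂ := fun x => T g x / g x
  have hw : Measurable w :=
    (Lp.stronglyMeasurable _).measurable.div (Lp.stronglyMeasurable _).measurable
  have hreal : ∀ᵐ x ∂μ, conj (w x) = w x := by
    filter_upwards [hcomm g g, hg] with x hx hgx
    have hgx' : conj (g x) ≠ 0 := by simpa using hgx
    simp only [RCLike.inner_apply] at hx
    simp only [w, map_div₀]
    field_simp
    linear_combination hx
  have hmul (ψ : Lp ℂ 2 μ) : ∀ᵐ x ∂μ, T ψ x = w x * ψ x := by
    filter_upwards [hcomm g ψ, hreal, hg] with x hx hwx hgx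
    have hgx' : conj (g x) ≠ 0 := by simpa using hgx
    simp only [RCLike.inner_apply] at hx
    rw [← hwx]
    simp only [w, map_div₀]
    field_simp
    linear_combination -hx
  have hnonneg := ae_nonneg_re_of_isPositive hT hmul
  refine ⟨fun x => (w x).re.toNNReal, (measurable_re.comp hw).real_toNNReal, fun ψ => ?_⟩
  filter_upwards [hmul ψ, hreal, hnonneg] with x hx hwx hx0
  rw [hx, NNReal.smul_def, Real.coe_toNNReal _ hx0, Complex.real_smul, Complex.conj_eq_iff_re.1 hwx]

end PositionMeasure

section Boosts

variable {E : Type*} [NormedAddCommGroup E] [NormedSpace ℝ E] [MeasurableSpace E]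
  {μ : Measure E} {V : StrongDual ℝ E → Lp ℂ 2 μ → Lp ℂ 2 μ}

theorem boost_boost_neg (hV : ∀ L φ, V L φ =ᵐ[μ] fun x => cexp (L x * I) * φ x)
    (L : StrongDual ℝ E) (φ : Lp ℂ 2 μ) : V L (V (-L) φ) = φ := by
  refine Lp.ext ?_
  filter_upwards [hV L (V (-L) φ), hV (-L) φ] with x hx hx'
  rw [hx, hx', ← mul_assoc, ← Complex.exp_add]
  simp

theorem inner_boost_right (hV : ∀ L φ, V L φ =ᵐ[μ] fun x => cexp (L x * I) * φ x)
    (L : StrongDual ℝ E) (φ ψ : Lp ℂ 2 μ) :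
    ⟪φ, V L ψ⟫ = ∫ x, cexp (L x * I) * ⟪φ x, ψ x⟫ ∂μ := by
  rw [L2.inner_def]
  refine integral_congr_ae ?_
  filter_upwards [hV L ψ] with x hx
  rw [hx, ← smul_eq_mul, inner_smul_right]

theorem inner_boost_neg_left (hV : ∀ L φ, V L φ =ᵐ[μ] fun x => cexp (L x * I) * φ x)
    (L : StrongDual ℝ E) (φ ψ : Lp ℂ 2 μ) :
    ⟪V (-L) φ, ψ⟫ = ∫ x, cexp (L x * I) * ⟪φ x, ψ x⟫ ∂μ := by
  rw [L2.inner_def]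
  refine integral_congr_ae ?_
  filter_upwards [hV (-L) φ] with x hx
  rw [hx, ← smul_eq_mul, inner_smul_left, ← Complex.exp_conj]
  simp

variable [CompleteSpace E] [SecondCountableTopology E] [BorelSpace E]

/- Both sides are integrable and have the Fourier transform `L ↦ ⟪φ, T (V L ψ)⟫`. -/
theorem inner_apply_comm_of_boost_invariant {T : Lp ℂ 2 μ →L[ℂ] Lp ℂ 2 μ}
    (hV : ∀ L φ, V L φ =ᵐ[μ] fun x => cexp (L x * I) * φ x) (hT : T.IsSymmetric)
    (hinv : ∀ L φ ψ, ⟪V L φ, T (V L ψ)⟫ = ⟪φ, T ψ⟫) (φ ψ : Lp ℂ 2 μ) :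
    ∀ᵐ x ∂μ, ⟪T φ x, ψ x⟫ = ⟪φ x, T ψ x⟫ := by
  have hint (φ ψ : Lp ℂ 2 μ) : Integrable (fun x => ⟪φ x, ψ x⟫) μ := L2.integrable_inner φ ψ
  have hzero := ae_eq_zero_of_forall_integral_cexp_mul_eq_zero
    ((hint (T φ) ψ).sub (hint φ (T ψ))) fun L => by
      simp only [Pi.sub_apply, mul_sub]
      rw [integral_sub (integrable_cexp_mul (hint _ _) L) (integrable_cexp_mul (hint _ _) L),
        sub_eq_zero]
      calc ∫ x, cexp (L x * I) * ⟪T φ x, ψ x⟫ ∂μ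
          = ⟪T φ, V L ψ⟫ := (inner_boost_right hV L _ ψ).symm
        _ = ⟪φ, T (V L ψ)⟫ := hT φ _
        _ = ⟪V (-L) φ, T ψ⟫ := by rw [← hinv L (V (-L) φ), boost_boost_neg hV]
        _ = ∫ x, cexp (L x * I) * ⟪φ x, T ψ x⟫ ∂μ := inner_boost_neg_left hV L φ _
  exact hzero.mono fun x => sub_eq_zero.1

end Boosts

section Convolution

variable {G : Type*} [MeasurableSpace G]

theorem conv_apply_eq_lintegral [AddMonoid G] [MeasurableAdd₂ G] {μ ν : Measure G} [SFinite μ]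
    [SFinite ν] {B : Set G} (hB : MeasurableSet B) :
    (μ ∗ ν) B = ∫⁻ y, μ ((· + y) ⁻¹' B) ∂ν := by
  rw [Measure.conv, Measure.map_apply measurable_add hB,
    Measure.prod_apply_symm (measurable_add hB)]
  rfl

theorem integral_measureReal_preimage_add_smul [AddCommGroup G] [MeasurableAdd₂ G] [MeasurableNeg G]
    {μ ρ : Measure G} [SFinite μ] [μ.IsAddRightInvariant] [IsFiniteMeasure ρ] {F : Type*}
    [NormedAddCommGroup F] [NormedSpace ℝ F] [CompleteSpace F] {f : G → F} (hf : Integrable f μ)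
    {B : Set G} (hB : MeasurableSet B) :
    ∫ y, ρ.real ((· + y) ⁻¹' B) • f y ∂μ = ∫ x in B, ∫ q, f (x - q) ∂ρ ∂μ := by
  have hadd : Measurable fun z : G × G => z.2 + z.1 := measurable_snd.add measurable_fst
  let S : Set (G × G) := (fun z => z.2 + z.1) ⁻¹' B
  have hS : MeasurableSet S := hadd hB
  have hshear := measurePreserving_sub_prod μ ρ
  have hf' : Integrable (fun z : G × G => f z.1) (μ.prod ρ) := hf.comp_fst ρ
  calc ∫ y, ρ.real ((· + y) ⁻¹' B) • f y ∂μ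
      = ∫ y, ∫ q, S.indicator (fun z => f z.1) (y, q) ∂ρ ∂μ := by
        refine integral_congr_ae (ae_of_all _ fun y => ?_)
        exact (integral_indicator_const (f y) ((measurable_add_const y) hB)).symm
    _ = ∫ z in S, f z.1 ∂μ.prod ρ := by
        rw [← integral_prod _ (hf'.indicator hS), integral_indicator hS]
    _ = ∫ z in B ×ˢ univ, f (z.1 - z.2) ∂μ.prod ρ := by
        rw [← hshear.map_eq, setIntegral_map hS (by rw [hshear.map_eq]; exact hf'.1)
          hshear.measurable.aemeasurable, hshear.map_eq]
        congr 2
        ext z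
        simp [S]
    _ = ∫ x in B, ∫ q, f (x - q) ∂ρ ∂μ := by
        rw [setIntegral_prod (fun z : G × G => f (z.1 - z.2))
          (hshear.integrable_comp_of_integrable hf').integrableOn, Measure.restrict_univ]

end Convolution

namespace POVM

section OutcomeMeasure

variable {Ω : Type*} [MeasurableSpace Ω] {H : Type*} [NormedAddCommGroup H]
  [InnerProductSpace ℂ H] [CompleteSpace H]

theorem inner_toFun_empty (M : POVM Ω H) (φ : H) : ⟪φ, M.toFun ∅ φ⟫ = 0 := by
  have h := M.m_iUnion (fun _ => ∅) (fun _ => .empty) (fun _ _ _ => disjoint_empty _) φ φ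
  exact (summable_const_iff _).1 h.summable

/-- The (unnormalized) distribution `B ↦ ⟪φ, M(B)φ⟫` of the outcomes of a measurement of `M` in
the pure state `φ`. -/
noncomputable def outcomeMeasure (M : POVM Ω H) (φ : H) : Measure Ω :=
  Measure.ofMeasurable (fun B _ => ENNReal.ofReal ⟪φ, M.toFun B φ⟫.re)
    (by simp [inner_toFun_empty])
    fun B hB hd => by
      have hsum := Complex.hasSum_re (M.m_iUnion B hB hd φ φ)
      rw [← hsum.tsum_eq, ENNReal.ofReal_tsum_of_nonneg _ hsum.summable]
      exact fun k => (Complex.nonneg_iff.1 ((M.isPositive _ (hB k)).inner_nonneg_right φ)).1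

theorem outcomeMeasure_apply (M : POVM Ω H) (φ : H) {B : Set Ω} (hB : MeasurableSet B) :
    M.outcomeMeasure φ B = ENNReal.ofReal ⟪φ, M.toFun B φ⟫.re :=
  Measure.ofMeasurable_apply B hB

theorem outcomeMeasure_univ (M : POVM Ω H) (φ : H) : M.outcomeMeasure φ univ = ‖φ‖ₑ ^ 2 := by
  have hφ : ⟪φ, φ⟫.re = ‖φ‖ ^ 2 := inner_self_eq_norm_sq (𝕜 := ℂ) φ
  rw [outcomeMeasure_apply M φ .univ, M.normalized, one_apply_eq_self, hφ,
    ofReal_pow (norm_nonneg φ), ofReal_norm]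

instance (M : POVM Ω H) (φ : H) : IsFiniteMeasure (M.outcomeMeasure φ) :=
  ⟨by simp [outcomeMeasure_univ]⟩

theorem outcomeMeasure_translate [AddGroup Ω] [MeasurableAdd Ω] (M : POVM Ω H) {φ φ' : H} {q : Ω}
    (h : ∀ B, MeasurableSet B → ⟪φ', M.toFun ((· + q) '' B) φ'⟫ = ⟪φ, M.toFun B φ⟫) :
    M.outcomeMeasure φ' = (M.outcomeMeasure φ).map (· + q) := by
  ext B hB
  have hB' := (measurable_add_const q) hB
  rw [Measure.map_apply (measurable_add_const q) hB, outcomeMeasure_apply M _ hB,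
    outcomeMeasure_apply M _ hB', ← h _ hB', image_preimage_eq _ (add_right_surjective q)]

end OutcomeMeasure

theorem outcomeMeasure_apply_eq_lintegral {Ω : Type*} [MeasurableSpace Ω]
    {μ : Measure Ω} {M : POVM Ω (Lp ℂ 2 μ)} {B : Set Ω} (hB : MeasurableSet B) {m : Ω → ℝ≥0}
    (hm : IsMulOperator (M.toFun B) m) (φ : Lp ℂ 2 μ) :
    M.outcomeMeasure φ B = ∫⁻ x, m x ∂positionMeasure φ := by
  rw [outcomeMeasure_apply M φ hB, hm.ofReal_re_inner]

section Covariant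

variable {G : Type*} [AddCommGroup G] [MeasurableSpace G] [MeasurableAdd₂ G] {μ : Measure G}
  {M : POVM G (Lp ℂ 2 μ)} {U : G → Lp ℂ 2 μ → Lp ℂ 2 μ}

theorem outcomeMeasure_conv_positionMeasure_apply
    (hpos : ∀ q φ, positionMeasure (U q φ) = (positionMeasure φ).map (· + q))
    (hout : ∀ q φ, M.outcomeMeasure (U q φ) = (M.outcomeMeasure φ).map (· + q))
    {B : Set G} (hB : MeasurableSet B) {m : G → ℝ≥0} (hm : IsMulOperator (M.toFun B) m)
    (φ ψ : Lp ℂ 2 μ) :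
    (M.outcomeMeasure φ ∗ positionMeasure ψ) B
      = ∫⁻ x, m x ∂(positionMeasure ψ ∗ positionMeasure φ) := by
  have hm' : Measurable fun x => (m x : ℝ≥0∞) := hm.1.coe_nnreal_ennreal
  rw [conv_apply_eq_lintegral hB, Measure.lintegral_conv hm']
  refine lintegral_congr fun q => ?_
  rw [← Measure.map_apply (measurable_add_const q) hB, ← hout,
    outcomeMeasure_apply_eq_lintegral hB hm, hpos, lintegral_map hm' (measurable_add_const q)]
  simp only [add_comm]

theorem outcomeMeasure_conv_positionMeasure_comm
    (hpos : ∀ q φ, positionMeasure (U q φ) = (positionMeasure φ).map (· + q))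
    (hout : ∀ q φ, M.outcomeMeasure (U q φ) = (M.outcomeMeasure φ).map (· + q))
    (hmul : ∀ B, MeasurableSet B → ∃ m, IsMulOperator (M.toFun B) m) (φ ψ : Lp ℂ 2 μ) :
    M.outcomeMeasure φ ∗ positionMeasure ψ = M.outcomeMeasure ψ ∗ positionMeasure φ := by
  ext B hB
  obtain ⟨m, hm⟩ := hmul B hB
  rw [outcomeMeasure_conv_positionMeasure_apply hpos hout hB hm,
    outcomeMeasure_conv_positionMeasure_apply hpos hout hB hm, Measure.conv_comm]

theorem ae_eq_measure_preimage_add [SigmaFinite μ] {ρ : Measure G} [SFinite ρ]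
    (hρ : ∀ φ, M.outcomeMeasure φ = ρ ∗ positionMeasure φ) {B : Set G} (hB : MeasurableSet B)
    {m : G → ℝ≥0} (hm : IsMulOperator (M.toFun B) m) :
    ∀ᵐ y ∂μ, m y = ρ ((· + y) ⁻¹' B) := by
  have hmeas : Measurable fun y => ρ ((· + y) ⁻¹' B) :=
    measurable_measure_prodMk_right (measurable_add hB)
  refine ae_eq_of_forall_setLIntegral_eq_of_sigmaFinite hm.1.coe_nnreal_ennreal hmeas
    fun A hA hμA => ?_
  rw [← positionMeasure_indicatorConstLp hA hμA.ne, ← outcomeMeasure_apply_eq_lintegral hB hm, hρ,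
    conv_apply_eq_lintegral hB]

theorem inner_toFun_eq_setIntegral [MeasurableNeg G] [SigmaFinite μ] [μ.IsAddRightInvariant]
    {ρ : Measure G} [IsFiniteMeasure ρ] (hρ : ∀ φ, M.outcomeMeasure φ = ρ ∗ positionMeasure φ)
    {B : Set G} (hB : MeasurableSet B) {m : G → ℝ≥0} (hm : IsMulOperator (M.toFun B) m)
    (φ ψ : Lp ℂ 2 μ) :
    ⟪φ, M.toFun B ψ⟫ = ∫ x in B, ∫ q, conj (φ (x - q)) * ψ (x - q) ∂ρ ∂μ := by
  have hint : Integrable (fun x => conj (φ x) * ψ x) μ := by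
    simpa only [RCLike.inner_apply, mul_comm] using L2.integrable_inner (𝕜 := ℂ) φ ψ
  rw [← integral_measureReal_preimage_add_smul hint hB, L2.inner_def]
  refine integral_congr_ae ?_
  filter_upwards [hm.2 ψ, ae_eq_measure_preimage_add hρ hB hm] with x hx hmx
  rw [hx, measureReal_def, ← hmx, coe_toReal, inner_smul_right_eq_smul, RCLike.inner_apply,
    mul_comm, NNReal.smul_def]

end Covariant

theorem exists_outcomeMeasure_eq_conv {E : Type*} [NormedAddCommGroup E] [NormedSpace ℝ E]
    [FiniteDimensional ℝ E] [MeasurableSpace E] [BorelSpace E] {μ : Measure E} [μ.IsAddHaarMeasure]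
    {M : POVM E (Lp ℂ 2 μ)}
    (hcomm : ∀ φ ψ : Lp ℂ 2 μ,
      M.outcomeMeasure φ ∗ positionMeasure ψ = M.outcomeMeasure ψ ∗ positionMeasure φ) :
    ∃ ρ : Measure E, IsProbabilityMeasure ρ ∧ ∀ φ, M.outcomeMeasure φ = ρ ∗ positionMeasure φ := by
  obtain ⟨ν, hν, hνμ, hlim⟩ := exists_absolutelyContinuous_tendsto_charFunDual_one μ
  choose φ hφ using fun i => exists_positionMeasure_eq (hνμ i)
  have hprob (i) : IsProbabilityMeasure (M.outcomeMeasure (φ i)) :=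
    ⟨by rw [outcomeMeasure_univ, ← positionMeasure_univ, hφ, measure_univ]⟩
  obtain ⟨ρ, hρ, h⟩ := exists_forall_eq_conv_of_conv_comm (μ := fun i => M.outcomeMeasure (φ i))
    (ν := ν) (fun i j => by rw [← hφ, ← hφ, hcomm]) hlim
  exact ⟨ρ, hρ, fun ψ => h _ _ fun i => by rw [← hφ, hcomm]⟩

end POVM

theorem stmt4_general {E : Type*} [NormedAddCommGroup E] [NormedSpace ℝ E]
    [FiniteDimensional ℝ E] [MeasurableSpace E] [BorelSpace E] {μ : Measure E}
    [μ.IsAddHaarMeasure]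
    {U : E → Lp ℂ 2 μ → Lp ℂ 2 μ} (hU : ∀ q φ, U q φ =ᵐ[μ] fun x => φ (x - q))
    {V : StrongDual ℝ E → Lp ℂ 2 μ → Lp ℂ 2 μ}
    (hV : ∀ L φ, V L φ =ᵐ[μ] fun x => cexp (L x * I) * φ x)
    {M : POVM E (Lp ℂ 2 μ)}
    (hMcov : ∀ q B, MeasurableSet B → ∀ φ ψ,
      ⟪U q φ, M.toFun ((· + q) '' B) (U q ψ)⟫ = ⟪φ, M.toFun B ψ⟫)
    (hMinv : ∀ L B, MeasurableSet B → ∀ φ ψ, ⟪V L φ, M.toFun B (V L ψ)⟫ = ⟪φ, M.toFun B ψ⟫) :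
    ∃ ρ : Measure E, IsProbabilityMeasure ρ ∧
      ∀ B, MeasurableSet B → ∀ φ ψ : Lp ℂ 2 μ,
        ⟪φ, M.toFun B ψ⟫ = ∫ x in B, (∫ q, conj (φ (x - q)) * ψ (x - q) ∂ρ) ∂μ := by
  have hmul (B) (hB : MeasurableSet B) : ∃ m, IsMulOperator (M.toFun B) m :=
    exists_isMulOperator_of_inner_comm (M.isPositive B hB)
      (inner_apply_comm_of_boost_invariant hV (M.isPositive B hB).isSymmetric fun L => hMinv L B hB)
  obtain ⟨ρ, hρ, hconv⟩ := M.exists_outcomeMeasure_eq_conv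
    (M.outcomeMeasure_conv_positionMeasure_comm
      (fun q φ => positionMeasure_of_ae_eq_sub (hU q φ))
      (fun q φ => M.outcomeMeasure_translate fun B hB => hMcov q B hB φ φ) hmul)
  refine ⟨ρ, hρ, fun B hB φ ψ => ?_⟩
  obtain ⟨m, hm⟩ := hmul B hB
  exact M.inner_toFun_eq_setIntegral hconv hB hm φ ψ

theorem stmt4 (n : ℕ) (hn : 1 ≤ n)
    (U : (Fin n → ℝ) → (L2Rn n ≃ₗᵢ[ℂ] L2Rn n))
    (hU : ∀ q : Fin n → ℝ, ∀ φ : L2Rn n,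
      (U q φ : (Fin n → ℝ) → ℂ) =ᵐ[volume] fun x => φ (x - q))
    (V : (Fin n → ℝ) → (L2Rn n ≃ₗᵢ[ℂ] L2Rn n))
    (hV : ∀ p : Fin n → ℝ, ∀ φ : L2Rn n,
      (V p φ : (Fin n → ℝ) → ℂ) =ᵐ[volume]
        fun x => Complex.exp (Complex.I * (∑ k, p k * x k)) * φ x)
    (M : POVM (Fin n → ℝ) (L2Rn n))
    (hMcov : TransCovariant n U M) (hMinv : BoostInvariant n V M) :
    ∃ ρ : Measure (Fin n → ℝ), IsProbabilityMeasure ρ ∧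
      ∀ B : Set (Fin n → ℝ), MeasurableSet B → ∀ φ ψ : L2Rn n,
        ⟪φ, M.toFun B ψ⟫
          = ∫ x in B, (∫ q, conj (φ (x - q)) * ψ (x - q) ∂ρ) := by
  refine stmt4_general (U := fun q => U q) hU (V := fun L => V fun k => L (Pi.single k 1))
    (fun L φ => ?_) hMcov fun L => hMinv _
  have hL (x : Fin n → ℝ) : L x = ∑ k, L (Pi.single k 1) * x k := by
    simpa [mul_comm] using congrArg L ((Pi.basisFun ℝ (Fin n)).sum_repr x).symm
  filter_upwards [hV (fun k => L (Pi.single k 1)) φ] with x hx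
  rw [hL x, mul_comm]
  simpa only [mul_comm] using hx
end
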